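/- arXiv:1203.5135 — 2 statements merged into one kernel-verified Lean document; each statement's English description precedes it below -/
import Mathlib

section
/- Let λ > 0, r > 2, 1 < t < ∞, and fix linearization data as in the context. Suppose 𝐏 is a collection of quartiles such that for each P ∈ 𝐏 one has I_P ⊄ {x : M^t[f](x) > λ}. Then for each i ∈ {1,2,3,4}: size_i(𝐏, f) ≤ C_{r,t} λ, where C_{r,t} depends only on r and t. -/
/-!
Let `T` be an `i`-lacunary tree, put `c_P = ⟨f, φ̃_{P_i}⟩`, and let `S = ∑ c_P²`, so that
`S = ∫ f ∑ c_P φ̃_{P_i}`. Multiplication by the Walsh character at the top frequency of the tree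
turns each `φ_{P_i}` into a multiple of a Haar function on every cell of length `|I_P|` or `|I_P|/2`
(`modulated_wp_flip`). Hence `F = ∑ c_P φ_{P_i}`, sorted by scale and modulated, is a dyadic
martingale on `I_T`, whose square function has integral `S`, and inserting the coefficients
`a_P(x)` gives at each point a linearized `r`-variation of its path.

Such a linearized variation is controlled, path by path, by a potential `varPot` (the proof of
Lépingle's inequality): for each `m`, stop the path each time it has moved by `2^{-m}` times its
running maximum. The squared jumps, summed with weights `2^{-m(r-2)}`, together with the running
maximum, dominate the squared `r`-variation (`sq_sum_linCoeff_le`). On average over the two halves of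
a cell the potential grows by at most a constant multiple of the square of the increment
(`varPot_avg`), where the running maximum is handled by the Bellman function of Doob's inequality.

It remains to integrate against `f`, which is controlled only through its averages on cells near the
tree. Induction over dyadic cells, from fine to coarse (`integral_le_of_martingale`), does this: a
cell below which no quartile of the tree remains carries a constant martingale path, and
there the potential of its history is paired with the average of `|f|`, which is at most `4λ`
because the next larger cells still meet a point where the maximal function is at most `λ`. With the
elementary inequality between a product and a sum of squares this gives `S ≤ S/2 + C λ² |I_T|`, so
that `S ≤ 2 C λ² |I_T|` (`tree_bound`).
-/

open MeasureTheory Set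
open scoped ENNReal

noncomputable section

/-- A dyadic interval `[n 2^k, (n+1) 2^k) ⊆ [0,∞)`. -/
structure DyadicInterval where
  n : ℕ
  k : ℤ
  deriving DecidableEq

namespace DyadicInterval

/-- The length `2^k` of a dyadic interval. -/
def len (I : DyadicInterval) : ℝ := 2 ^ I.k

/-- The left endpoint `n 2^k` of a dyadic interval. -/
def lo (I : DyadicInterval) : ℝ := I.n * 2 ^ I.k

/-- A dyadic interval as a subset of `ℝ`. -/
def toSet (I : DyadicInterval) : Set ℝ := Set.Ico I.lo (I.lo + I.len)

end DyadicInterval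

/-- The Walsh function of index `m` (Paley ordering): for `y ∈ [0,1)` with binary digits
`y_i`, `W_m(y) = (-1)^{∑ m_i y_i}`. -/
def walshF (m : ℕ) (y : ℝ) : ℝ :=
  ∏ i ∈ Finset.range m, if m.testBit i then (-1 : ℝ) ^ ⌊y * 2 ^ (i + 1)⌋ else 1

/-- The Walsh wave packet of the rectangle `I × ω`.  For a tile (a rectangle of area one) this
is the unique family satisfying `φ_{I×[0,2^n)} = |I|^{-1/2} 1_I` together with the recursions
`φ_{I×ω_r} = (φ_{I_l×ω} − φ_{I_r×ω})/√2` and `φ_{I×ω_l} = (φ_{I_l×ω} + φ_{I_r×ω})/√2`. -/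
def wavePacket (I ω : DyadicInterval) (x : ℝ) : ℝ :=
  I.toSet.indicator (fun x => I.len ^ (-(1 : ℝ) / 2) * walshF ω.n ((x - I.lo) / I.len)) x

/-- `⟨f, g⟩ = ∫_0^∞ f g`. -/
def innerF (f g : ℝ → ℝ) : ℝ := ∫ x in Set.Ici (0 : ℝ), f x * g x

/-- A tile: a dyadic rectangle of area one. -/
structure Tile where
  I : DyadicInterval
  ω : DyadicInterval
  area : I.k + ω.k = 0

/-- The Walsh wave packet of a tile. -/
def Tile.wp (p : Tile) : ℝ → ℝ := wavePacket p.I p.ω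

/-- A tile as a subset of `[0,∞) × [0,∞)`. -/
def Tile.toSet (p : Tile) : Set (ℝ × ℝ) := p.I.toSet ×ˢ p.ω.toSet

/-- A quartile: a dyadic rectangle of area four. -/
structure Quartile where
  I : DyadicInterval
  ω : DyadicInterval
  area : I.k + ω.k = 2

namespace Quartile

/-- The frequency interval `ω_{P_{i+1}}` (the `i`-th dyadic grandchild of `ω_P`, `i : Fin 4`,
in increasing order). -/
def freq (P : Quartile) (i : Fin 4) : DyadicInterval := ⟨4 * P.ω.n + i.val, P.ω.k - 2⟩

/-- The tile `P_{i+1} = I_P × ω_{P_{i+1}}` as a subset of the plane, for `i : Fin 4`. -/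
def subtileSet (P : Quartile) (i : Fin 4) : Set (ℝ × ℝ) := P.I.toSet ×ˢ (P.freq i).toSet

/-- The Walsh wave packet `φ_{P_{i+1}}` for `i : Fin 4`. -/
def wp (P : Quartile) (i : Fin 4) : ℝ → ℝ := wavePacket P.I (P.freq i)

end Quartile

instance : DecidableEq Quartile := fun P Q =>
  decidable_of_iff (P.I = Q.I ∧ P.ω = Q.ω) (by cases P; cases Q; simp)

/-- `(T, ξ, I_T)` is a tree: `ξ ∈ [0,∞)` and every `P ∈ T` has `I_P ⊆ I_T` and `ξ ∈ ω_P`. -/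
def IsTree (T : Finset Quartile) (ξ : ℝ) (It : DyadicInterval) : Prop :=
  0 ≤ ξ ∧ ∀ P ∈ T, P.I.toSet ⊆ It.toSet ∧ ξ ∈ P.ω.toSet

/-- An `i`-overlapping tree (`i : Fin 4` indexes `P_1,…,P_4`): `ξ_T ∈ ω_{P_{i+1}}` for all `P`. -/
def IsOverlapping (i : Fin 4) (T : Finset Quartile) (ξ : ℝ) (It : DyadicInterval) : Prop :=
  IsTree T ξ It ∧ ∀ P ∈ T, ξ ∈ (P.freq i).toSet

/-- An `i`-lacunary tree: `j`-overlapping for some `j ≠ i`. -/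
def IsLacunary (i : Fin 4) (T : Finset Quartile) (ξ : ℝ) (It : DyadicInterval) : Prop :=
  ∃ j, j ≠ i ∧ IsOverlapping j T ξ It

/-- `ω_T`: the dyadic interval of length `|I_T|⁻¹` containing `ξ`; `p_T = I_T × ω_T`. -/
def topFreq (It : DyadicInterval) (ξ : ℝ) : DyadicInterval := ⟨(⌊ξ * 2 ^ It.k⌋).toNat, -It.k⟩

/-- The dyadic interval of length `2^k` containing `x ≥ 0`. -/
def dyadicPiece (k : ℤ) (x : ℝ) : Set ℝ :=
  Set.Ico ((⌊x / 2 ^ k⌋ : ℝ) * 2 ^ k) (((⌊x / 2 ^ k⌋ : ℝ) + 1) * 2 ^ k)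

/-- The dyadic averaging operator `A_k[f](x) = |I|⁻¹ ∫_I f` with `I ∋ x` dyadic, `|I| = 2^k`. -/
def dyadicAvg (k : ℤ) (f : ℝ → ℝ) (x : ℝ) : ℝ :=
  ((2 : ℝ) ^ k)⁻¹ * ∫ y in dyadicPiece k x, f y

/-- The `r`-variation seminorm of `g : ℤ → ℝ` over the index set `S ⊆ ℤ`:
the supremum of `(∑_{j=1}^N |g(k_j) − g(k_{j−1})|^r)^{1/r}` over finite increasing
sequences `k_0 < ⋯ < k_N` in `S`. -/
def varNorm (r : ℝ) (S : Set ℤ) (g : ℤ → ℝ) : ℝ≥0∞ :=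
  ⨆ (N : ℕ) (k : ℕ → ℤ) (_ : StrictMono k) (_ : ∀ j ≤ N, k j ∈ S),
    (∑ j ∈ Finset.range N, ENNReal.ofReal (|g (k (j + 1)) - g (k j)| ^ r)) ^ (1 / r)

/-- The dyadic `L^t` Hardy–Littlewood maximal operator `M^t[f](x) = sup_k (A_k[|f|^t](x))^{1/t}`. -/
def maxOp (t : ℝ) (f : ℝ → ℝ) (x : ℝ) : ℝ≥0∞ :=
  ⨆ k : ℤ, ((ENNReal.ofReal ((2 : ℝ) ^ k))⁻¹ *
    ∫⁻ y in dyadicPiece k x, ENNReal.ofReal (|f y| ^ t)) ^ (1 / t)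

/-- Given a strictly increasing `kk : ℤ → ℤ` and coefficients `a : ℤ → ℝ`, the coefficient
`a_m` where `m` is the (unique) integer with `kk (m-1) ≤ K < kk m` (`K = log₂|I_P|`),
and `0` if no such `m` exists. -/
def linCoeff (kk : ℤ → ℤ) (a : ℤ → ℝ) (K : ℤ) : ℝ :=
  letI := Classical.propDecidable (∃ m : ℤ, kk (m - 1) ≤ K ∧ K < kk m)
  if h : ∃ m : ℤ, kk (m - 1) ≤ K ∧ K < kk m then a h.choose else 0

/-- Linearization data for the `r`-variation: measurably in `x`, a strictly increasing
sequence of integers `k_j(x)` and coefficients `a_j(x)` with `∑_j |a_j(x)|^{r'} ≤ 1`,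
`r' = r/(r-1)`. -/
structure LinData (r : ℝ) where
  kseq : ℝ → ℤ → ℤ
  aseq : ℝ → ℤ → ℝ
  mono : ∀ x, StrictMono (kseq x)
  meas_k : ∀ j, Measurable fun x => kseq x j
  meas_a : ∀ j, Measurable fun x => aseq x j
  abound : ∀ x, ∀ s : Finset ℤ, ∑ j ∈ s, |aseq x j| ^ (r / (r - 1)) ≤ 1

/-- `a_P(x)` for a quartile `P`. -/
def LinData.coeff {r : ℝ} (L : LinData r) (P : Quartile) (x : ℝ) : ℝ :=
  linCoeff (L.kseq x) (L.aseq x) P.I.k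

/-- The modified wave packets: `φ̃_{P_3}(x) = a_P(x) φ_{P_3}(x)` and `φ̃_{P_i} = φ_{P_i}`
for `i ≠ 3` (here `i : Fin 4`, so index `2` plays the role of `3`). -/
def LinData.wp {r : ℝ} (L : LinData r) (P : Quartile) (i : Fin 4) (x : ℝ) : ℝ :=
  (if i = (2 : Fin 4) then L.coeff P x else 1) * P.wp i x

/-- `size_i(Ps, f)`: the sup of `(|I_T|⁻¹ ∑_{P ∈ T} |⟨f, φ̃_{P_i}⟩|²)^{1/2}` over
`i`-lacunary trees `T ⊆ Ps`. -/
def treeSize {r : ℝ} (L : LinData r) (i : Fin 4) (Ps : Set Quartile) (f : ℝ → ℝ) : ℝ≥0∞ :=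
  ⨆ (T : Finset Quartile) (ξ : ℝ) (It : DyadicInterval)
    (_ : IsLacunary i T ξ It) (_ : (T : Set Quartile) ⊆ Ps),
    ENNReal.ofReal ((It.len)⁻¹ * ∑ P ∈ T, innerF f (L.wp P i) ^ 2) ^ ((1 : ℝ) / 2)

/-- Lebesgue measure restricted to `[0,∞)`. -/
def mu0 : Measure ℝ := volume.restrict (Set.Ici 0)

end

/-! ### Pathwise quantities of a real sequence -/

/-- Partial sums `f_n = δ_0 + ⋯ + δ_{n-1}` of the increments `δ`. -/
noncomputable def pathSum (δ : ℕ → ℝ) (n : ℕ) : ℝ := ∑ k ∈ Finset.range n, δ k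

/-- Running maximum `M_n = max_{k ≤ n} |f_k|` of the partial sums. -/
noncomputable def pathMax (δ : ℕ → ℝ) : ℕ → ℝ
  | 0 => 0
  | n + 1 => max (pathMax δ n) |pathSum δ (n + 1)|

/-- Value of the partial sum at the last stopping time of level `m` before `n`.  A new stopping
time occurs as soon as the partial sum is more than `2^{-m} M_n` away from its value at the
previous one. -/
noncomputable def stopVal (δ : ℕ → ℝ) (m : ℕ) : ℕ → ℝ
  | 0 => 0
  | n + 1 =>
    if (1 / 2 : ℝ) ^ m * pathMax δ (n + 1) < |pathSum δ (n + 1) - stopVal δ m n| then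
      pathSum δ (n + 1) else stopVal δ m n

/-- Sum of the squared jumps between consecutive stopping times of level `m` up to time `n`. -/
noncomputable def jumpSq (δ : ℕ → ℝ) (m : ℕ) : ℕ → ℝ
  | 0 => 0
  | n + 1 =>
    if (1 / 2 : ℝ) ^ m * pathMax δ (n + 1) < |pathSum δ (n + 1) - stopVal δ m n| then
      jumpSq δ m n + (pathSum δ (n + 1) - stopVal δ m n) ^ 2 else jumpSq δ m n

/-- The completed squared jumps of level `m` together with the square of the current unfinished
one.  On a martingale its expectation grows exactly by the square of the increment. -/
noncomputable def levelPot (δ : ℕ → ℝ) (m n : ℕ) : ℝ :=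
  jumpSq δ m n + (pathSum δ n - stopVal δ m n) ^ 2

/-- The Bellman function `4f² - 4M|f| + 2M²` for Doob's maximal inequality in `L²`. -/
noncomputable def doobPot (δ : ℕ → ℝ) (n : ℕ) : ℝ :=
  4 * pathSum δ n ^ 2 - 4 * pathMax δ n * |pathSum δ n| + 2 * pathMax δ n ^ 2

/-- The potential that controls the `r`-variation, with `ρ = 2^{-(r-2)}`. -/
noncomputable def varPot (ρ : ℝ) (δ : ℕ → ℝ) (n : ℕ) : ℝ :=
  doobPot δ n + ∑' m, ρ ^ m * levelPot δ m n

/-- Weighted sum over all levels of the squared jumps. -/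
noncomputable def totalJump (ρ : ℝ) (δ : ℕ → ℝ) (n : ℕ) : ℝ := ∑' m, ρ ^ m * jumpSq δ m n

lemma pathSum_succ (δ : ℕ → ℝ) (n : ℕ) : pathSum δ (n + 1) = pathSum δ n + δ n :=
  Finset.sum_range_succ _ _

lemma pathMax_nonneg (δ : ℕ → ℝ) (n : ℕ) : 0 ≤ pathMax δ n := by
  induction n with
  | zero => simp [pathMax]
  | succ n ih => exact le_max_of_le_left ih

lemma pathMax_mono (δ : ℕ → ℝ) : Monotone (pathMax δ) :=
  monotone_nat_of_le_succ fun _ => le_max_left _ _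

lemma abs_pathSum_le (δ : ℕ → ℝ) (n : ℕ) : |pathSum δ n| ≤ pathMax δ n := by
  cases n with
  | zero => simp [pathMax, pathSum]
  | succ n => exact le_max_right _ _

lemma jumpSq_mono (δ : ℕ → ℝ) (m : ℕ) : Monotone (jumpSq δ m) := by
  refine monotone_nat_of_le_succ fun n => ?_
  rw [jumpSq]
  split_ifs
  · nlinarith [sq_nonneg (pathSum δ (n + 1) - stopVal δ m n)]
  · exact le_rfl

lemma jumpSq_nonneg (δ : ℕ → ℝ) (m n : ℕ) : 0 ≤ jumpSq δ m n :=
  jumpSq_mono δ m (Nat.zero_le n)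

lemma abs_sub_stopVal_le (δ : ℕ → ℝ) (m n : ℕ) :
    |pathSum δ n - stopVal δ m n| ≤ (1 / 2 : ℝ) ^ m * pathMax δ n := by
  cases n with
  | zero => simp [pathSum, stopVal, pathMax]
  | succ n =>
    rw [stopVal]
    split_ifs with h
    · have h1 : 0 ≤ (1 / 2 : ℝ) ^ m * pathMax δ (n + 1) :=
        mul_nonneg (by positivity) (pathMax_nonneg δ (n + 1))
      simpa using h1
    · exact not_lt.1 h

lemma levelPot_nonneg (δ : ℕ → ℝ) (m n : ℕ) : 0 ≤ levelPot δ m n :=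
  add_nonneg (jumpSq_nonneg δ m n) (sq_nonneg _)

lemma jumpSq_le_levelPot (δ : ℕ → ℝ) (m n : ℕ) : jumpSq δ m n ≤ levelPot δ m n :=
  le_add_of_nonneg_right (sq_nonneg _)

/-- Whether or not a stopping time occurs, the level potential is updated by one formula. -/
lemma levelPot_succ (δ : ℕ → ℝ) (m n : ℕ) :
    levelPot δ m (n + 1) = jumpSq δ m n + (pathSum δ n + δ n - stopVal δ m n) ^ 2 := by
  rw [levelPot, jumpSq, stopVal, ← pathSum_succ]
  split_ifs <;> simp

lemma levelPot_bdd (δ : ℕ → ℝ) (n : ℕ) : ∃ B, ∀ m, levelPot δ m n ≤ B := by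
  induction n with
  | zero => exact ⟨0, fun m => by simp [levelPot, jumpSq, stopVal, pathSum]⟩
  | succ n ih =>
    obtain ⟨B, hB⟩ := ih
    refine ⟨2 * B + 2 * δ n ^ 2, fun m => ?_⟩
    rw [levelPot_succ]
    have h1 := hB m
    have h2 := jumpSq_nonneg δ m n
    rw [levelPot] at h1
    nlinarith [sq_nonneg (pathSum δ n - stopVal δ m n - δ n)]

lemma summable_levelPot {ρ : ℝ} (h0 : 0 ≤ ρ) (h1 : ρ < 1) (δ : ℕ → ℝ) (n : ℕ) :
    Summable fun m => ρ ^ m * levelPot δ m n := by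
  obtain ⟨B, hB⟩ := levelPot_bdd δ n
  refine Summable.of_nonneg_of_le (fun m => mul_nonneg (pow_nonneg h0 m) (levelPot_nonneg δ m n))
    (fun m => mul_le_mul_of_nonneg_left (hB m) (pow_nonneg h0 m))
    ((summable_geometric_of_lt_one h0 h1).mul_right B)

lemma summable_jumpSq {ρ : ℝ} (h0 : 0 ≤ ρ) (h1 : ρ < 1) (δ : ℕ → ℝ) (n : ℕ) :
    Summable fun m => ρ ^ m * jumpSq δ m n :=
  Summable.of_nonneg_of_le (fun m => mul_nonneg (pow_nonneg h0 m) (jumpSq_nonneg δ m n))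
    (fun m => mul_le_mul_of_nonneg_left (jumpSq_le_levelPot δ m n) (pow_nonneg h0 m))
    (summable_levelPot h0 h1 δ n)

lemma sq_pathMax_le_doobPot (δ : ℕ → ℝ) (n : ℕ) : pathMax δ n ^ 2 ≤ doobPot δ n := by
  rw [doobPot, ← sq_abs (pathSum δ n)]
  nlinarith [sq_nonneg (2 * |pathSum δ n| - pathMax δ n)]

/-- Updating the running maximum only lowers the Doob potential, as
`4q² - 4Mq + 2M² = 2q² + 2(q - M)²`. -/
lemma doobPot_succ_le (δ : ℕ → ℝ) (n : ℕ) :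
    doobPot δ (n + 1) ≤ 4 * (pathSum δ n + δ n) ^ 2
      - 4 * pathMax δ n * |pathSum δ n + δ n| + 2 * pathMax δ n ^ 2 := by
  rw [doobPot, pathMax, ← pathSum_succ]
  rcases le_total (pathMax δ n) |pathSum δ (n + 1)| with h | h
  · rw [max_eq_right h]
    nlinarith [sq_nonneg (|pathSum δ (n + 1)| - pathMax δ n)]
  · rw [max_eq_left h]

lemma path_congr {δ ε : ℕ → ℝ} {n : ℕ} (h : ∀ k < n, δ k = ε k) :
    pathSum δ n = pathSum ε n ∧ pathMax δ n = pathMax ε n ∧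
      ∀ m, stopVal δ m n = stopVal ε m n ∧ jumpSq δ m n = jumpSq ε m n := by
  induction n with
  | zero => simp [pathSum, pathMax, stopVal, jumpSq]
  | succ n ih =>
    obtain ⟨h1, h2, h3⟩ := ih fun k hk => h k (by omega)
    have hs : pathSum δ (n + 1) = pathSum ε (n + 1) := by
      rw [pathSum_succ, pathSum_succ, h1, h n (by omega)]
    refine ⟨hs, by rw [pathMax, pathMax, h2, hs], fun m => ?_⟩
    have hM : pathMax δ (n + 1) = pathMax ε (n + 1) := by rw [pathMax, pathMax, h2, hs]
    constructor
    · rw [stopVal, stopVal, hM, hs, (h3 m).1]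
    · rw [jumpSq, jumpSq, hM, hs, (h3 m).1, (h3 m).2]

lemma varPot_congr {ρ : ℝ} {δ ε : ℕ → ℝ} {n : ℕ} (h : ∀ k < n, δ k = ε k) :
    varPot ρ δ n = varPot ρ ε n := by
  obtain ⟨h1, h2, h3⟩ := path_congr h
  simp only [varPot, doobPot, levelPot, h1, h2, fun m => (h3 m).1, fun m => (h3 m).2]

lemma varPot_zero (ρ : ℝ) (δ : ℕ → ℝ) : varPot ρ δ 0 = 0 := by
  simp [varPot, doobPot, levelPot, pathSum, pathMax, jumpSq, stopVal]

/-- The supermartingale-type inequality: for two continuations of one history by opposite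
increments, the average of the potential grows at most by a multiple of the squared increment. -/
lemma varPot_avg {ρ : ℝ} (h0 : 0 ≤ ρ) (h1 : ρ < 1) {δ ε : ℕ → ℝ} {n : ℕ}
    (h : ∀ k < n, δ k = ε k) (hn : ε n = -δ n) :
    varPot ρ δ (n + 1) + varPot ρ ε (n + 1) ≤
      2 * (varPot ρ δ n + (4 + ∑' m : ℕ, ρ ^ m) * δ n ^ 2) := by
  obtain ⟨e1, e2, e3⟩ := path_congr h
  have hd := doobPot_succ_le δ n
  have he := doobPot_succ_le ε n
  rw [← e1, ← e2, hn] at he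
  have habs : 2 * |pathSum δ n| ≤ |pathSum δ n + δ n| + |pathSum δ n + -δ n| := by
    have := abs_add_le (pathSum δ n + δ n) (pathSum δ n + -δ n)
    rw [show pathSum δ n + δ n + (pathSum δ n + -δ n) = 2 * pathSum δ n by ring, abs_mul] at this
    simpa using this
  have hdoob : doobPot δ (n + 1) + doobPot ε (n + 1) ≤ 2 * (doobPot δ n + 4 * δ n ^ 2) := by
    have := mul_le_mul_of_nonneg_left habs (pathMax_nonneg δ n)
    rw [doobPot.eq_1 δ n]
    nlinarith
  have hsum : ∑' m, ρ ^ m * levelPot δ m (n + 1) + ∑' m, ρ ^ m * levelPot ε m (n + 1) =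
      2 * (∑' m, ρ ^ m * levelPot δ m n + (∑' m : ℕ, ρ ^ m) * δ n ^ 2) := by
    rw [← (summable_levelPot h0 h1 δ _).tsum_add (summable_levelPot h0 h1 ε _), ← tsum_mul_right,
      ← (summable_levelPot h0 h1 δ n).tsum_add
        ((summable_geometric_of_lt_one h0 h1).mul_right _), ← tsum_mul_left]
    refine tsum_congr fun m => ?_
    rw [levelPot_succ, levelPot_succ, ← e1, ← (e3 m).1, ← (e3 m).2, hn, levelPot]
    ring
  rw [varPot, varPot, varPot]
  linarith

/-! ### The pathwise variational inequality -/

/-- If an increment of the path over `[s, t]` is comparable to `2^{-m} M_t`, then a stopping time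
of level `m` falls in `(s, t]`, and the last of them has a jump of comparable size. -/
lemma jump_lower (δ : ℕ → ℝ) {m : ℕ} (hm : 1 ≤ m) {s t : ℕ} (hst : s ≤ t)
    (hlo : 2 * ((1 / 2 : ℝ) ^ m * pathMax δ t) < |pathSum δ t - pathSum δ s|)
    (hhi : |pathSum δ t - pathSum δ s| ≤ 4 * ((1 / 2 : ℝ) ^ m * pathMax δ t)) :
    (pathSum δ t - pathSum δ s) ^ 2 ≤ 64 * (jumpSq δ m t - jumpSq δ m s) := by
  set θ : ℝ := (1 / 2 : ℝ) ^ m with hθ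
  have hθ0 : 0 ≤ θ := by positivity
  have hθ1 : θ ≤ 1 / 2 := by
    calc θ ≤ (1 / 2 : ℝ) ^ 1 := pow_le_pow_of_le_one (by norm_num) (by norm_num) hm
      _ = 1 / 2 := by norm_num
  -- `G` is the running maximum at the last stopping time in `(s, t]`.
  have key : ∀ t, s ≤ t → stopVal δ m t = stopVal δ m s ∨
      ∃ G, |stopVal δ m t| ≤ G ∧ θ ^ 2 * G ^ 2 ≤ jumpSq δ m t - jumpSq δ m s ∧
        pathMax δ t ≤ G + θ * pathMax δ t := by
    intro t hst
    induction t, hst using Nat.le_induction with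
    | base => exact Or.inl rfl
    | succ t hst ih =>
      by_cases hc : θ * pathMax δ (t + 1) < |pathSum δ (t + 1) - stopVal δ m t|
      · refine Or.inr ⟨pathMax δ (t + 1), ?_, ?_, ?_⟩
        · rw [stopVal, if_pos hc]; exact abs_pathSum_le _ _
        · rw [jumpSq, if_pos hc]
          have h1 := jumpSq_mono δ m hst
          have h2 : (θ * pathMax δ (t + 1)) ^ 2 ≤ (pathSum δ (t + 1) - stopVal δ m t) ^ 2 := by
            rw [← sq_abs (pathSum δ (t + 1) - stopVal δ m t)]
            exact pow_le_pow_left₀ (mul_nonneg hθ0 (pathMax_nonneg _ _)) hc.le 2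
          nlinarith
        · exact le_add_of_nonneg_right (mul_nonneg hθ0 (pathMax_nonneg _ _))
      · have hs : stopVal δ m (t + 1) = stopVal δ m t := by rw [stopVal, if_neg hc]
        have hj : jumpSq δ m (t + 1) = jumpSq δ m t := by rw [jumpSq, if_neg hc]
        rw [hs, hj]
        refine ih.imp id ?_
        rintro ⟨G, g1, g2, g3⟩
        refine ⟨G, g1, g2, ?_⟩
        have hmono := mul_le_mul_of_nonneg_left (pathMax_mono δ (Nat.le_succ t)) hθ0
        have h4 : |pathSum δ (t + 1)| ≤ |stopVal δ m t| + θ * pathMax δ (t + 1) := by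
          have := abs_add_le (pathSum δ (t + 1) - stopVal δ m t) (stopVal δ m t)
          rw [sub_add_cancel] at this
          linarith [not_lt.1 hc]
        rw [pathMax.eq_2] at hmono h4 ⊢
        refine max_le ?_ ?_
        · exact g3.trans (by simpa using hmono)
        · linarith
  rcases key t hst with h | ⟨G, g1, g2, g3⟩
  · exfalso
    have h1 := abs_sub_stopVal_le δ m t
    have h2 := abs_sub_stopVal_le δ m s
    have h3 := mul_le_mul_of_nonneg_left (pathMax_mono δ hst) hθ0
    have h4 := abs_sub_le (pathSum δ t) (stopVal δ m t) (pathSum δ s)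
    rw [abs_sub_comm (stopVal δ m t), h] at h4
    rw [h] at h1
    linarith
  · have hM := pathMax_nonneg δ t
    have hMG : pathMax δ t ≤ 2 * G := by nlinarith
    have h5 : |pathSum δ t - pathSum δ s| ≤ 8 * (θ * G) := by nlinarith
    have h6 := pow_le_pow_left₀ (abs_nonneg _) h5 2
    rw [sq_abs] at h6
    nlinarith

/-- The constant of the pathwise variational estimate. -/
noncomputable def varConst (r : ℝ) : ℝ := 64 * 4 ^ (r - 2)

/-- Every increment of the path is charged to the jumps of one level inside the same window. -/
lemma rpow_increment_le {r : ℝ} (hr : 2 < r) (δ : ℕ → ℝ) {s t N : ℕ} (hst : s ≤ t) (htN : t ≤ N) :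
    |pathSum δ t - pathSum δ s| ^ r ≤ varConst r * pathMax δ N ^ (r - 2) *
      (totalJump ((1 / 2 : ℝ) ^ (r - 2)) δ t - totalJump ((1 / 2 : ℝ) ^ (r - 2)) δ s) := by
  set ρ : ℝ := (1 / 2 : ℝ) ^ (r - 2) with hρ
  have h0 : 0 ≤ ρ := by positivity
  have h1 : ρ < 1 := Real.rpow_lt_one (by norm_num) (by norm_num) (by linarith)
  have hMN := pathMax_nonneg δ N
  have hMt := pathMax_nonneg δ t
  have hdiff : totalJump ρ δ t - totalJump ρ δ s =
      ∑' m, ρ ^ m * (jumpSq δ m t - jumpSq δ m s) := by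
    rw [totalJump, totalJump, ← (summable_jumpSq h0 h1 δ t).tsum_sub (summable_jumpSq h0 h1 δ s)]
    exact tsum_congr fun m => by ring
  have hsm : Summable fun m => ρ ^ m * (jumpSq δ m t - jumpSq δ m s) := by
    simpa only [mul_sub] using (summable_jumpSq h0 h1 δ t).sub (summable_jumpSq h0 h1 δ s)
  have hnn : ∀ m, 0 ≤ ρ ^ m * (jumpSq δ m t - jumpSq δ m s) := fun m =>
    mul_nonneg (pow_nonneg h0 m) (sub_nonneg.2 (jumpSq_mono δ m hst))
  have hC : 0 ≤ varConst r := by unfold varConst; positivity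
  rcases eq_or_ne (pathSum δ t - pathSum δ s) 0 with hz | hz
  · rw [hz, abs_zero, Real.zero_rpow (by linarith), hdiff]
    exact mul_nonneg (mul_nonneg hC (Real.rpow_nonneg hMN _)) (tsum_nonneg hnn)
  have hx : 0 < |pathSum δ t - pathSum δ s| := abs_pos.2 hz
  have hx2 : |pathSum δ t - pathSum δ s| ≤ 2 * pathMax δ t := by
    have a1 := abs_sub (pathSum δ t) (pathSum δ s)
    have a2 := abs_pathSum_le δ t
    have a3 := (abs_pathSum_le δ s).trans (pathMax_mono δ hst)
    linarith
  have hMt' : 0 < pathMax δ t := by linarith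
  obtain ⟨n, hn1, hn2⟩ := exists_nat_pow_near_of_lt_one
    (x := |pathSum δ t - pathSum δ s| / (2 * pathMax δ t)) (y := (1 / 2 : ℝ))
    (by positivity) (by rw [div_le_one (by positivity)]; exact hx2) (by norm_num) (by norm_num)
  rw [lt_div_iff₀ (by positivity)] at hn1
  rw [div_le_iff₀ (by positivity)] at hn2
  have hhi : |pathSum δ t - pathSum δ s| ≤ 4 * ((1 / 2 : ℝ) ^ (n + 1) * pathMax δ t) := by
    rw [pow_succ]; linarith
  have hj := jump_lower δ (m := n + 1) (by omega) hst (by linarith) hhi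
  have hsingle : ρ ^ (n + 1) * (jumpSq δ (n + 1) t - jumpSq δ (n + 1) s) ≤
      totalJump ρ δ t - totalJump ρ δ s := by
    rw [hdiff]
    exact hsm.le_tsum (n + 1) fun m _ => hnn m
  have hpow : |pathSum δ t - pathSum δ s| ^ (r - 2) ≤
      4 ^ (r - 2) * (ρ ^ (n + 1) * pathMax δ N ^ (r - 2)) := by
    have hρn : ρ ^ (n + 1) = ((1 / 2 : ℝ) ^ (n + 1)) ^ (r - 2) := by
      rw [hρ, ← Real.rpow_natCast, ← Real.rpow_natCast, ← Real.rpow_mul (by norm_num),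
        ← Real.rpow_mul (by norm_num), mul_comm]
    rw [hρn, ← Real.mul_rpow (by positivity) hMN, ← Real.mul_rpow (by norm_num) (by positivity)]
    refine Real.rpow_le_rpow (abs_nonneg _) (hhi.trans ?_) (by linarith)
    have := pathMax_mono δ htN
    gcongr
  have hsplit : |pathSum δ t - pathSum δ s| ^ r =
      |pathSum δ t - pathSum δ s| ^ (r - 2) * (pathSum δ t - pathSum δ s) ^ 2 := by
    rw [← sq_abs (pathSum δ t - pathSum δ s), ← Real.rpow_natCast _ 2, ← Real.rpow_add hx]
    congr 1
    push_cast
    ring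
  rw [hsplit]
  calc |pathSum δ t - pathSum δ s| ^ (r - 2) * (pathSum δ t - pathSum δ s) ^ 2
      ≤ (4 ^ (r - 2) * (ρ ^ (n + 1) * pathMax δ N ^ (r - 2))) *
        (64 * (jumpSq δ (n + 1) t - jumpSq δ (n + 1) s)) :=
        mul_le_mul hpow hj (sq_nonneg _) (by positivity)
    _ = varConst r * pathMax δ N ^ (r - 2) *
        (ρ ^ (n + 1) * (jumpSq δ (n + 1) t - jumpSq δ (n + 1) s)) := by
        rw [varConst]; ring
    _ ≤ _ := mul_le_mul_of_nonneg_left hsingle (mul_nonneg hC (Real.rpow_nonneg hMN _))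

lemma linCoeff_eq {kk : ℤ → ℤ} (hk : StrictMono kk) (a : ℤ → ℝ) {K m : ℤ}
    (h1 : kk (m - 1) ≤ K) (h2 : K < kk m) : linCoeff kk a K = a m := by
  have h : ∃ m : ℤ, kk (m - 1) ≤ K ∧ K < kk m := ⟨m, h1, h2⟩
  have hc := h.choose_spec
  have e : h.choose = m := by
    have l1 := hk.lt_iff_lt.1 (hc.1.trans_lt h2)
    have l2 := hk.lt_iff_lt.1 (h1.trans_lt hc.2)
    omega
  rw [linCoeff, dif_pos h, e]

lemma linCoeff_eq_zero {kk : ℤ → ℤ} (a : ℤ → ℝ) {K : ℤ}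
    (h : ¬ ∃ m : ℤ, kk (m - 1) ≤ K ∧ K < kk m) : linCoeff kk a K = 0 := by
  rw [linCoeff, dif_neg h]

lemma sq_pathMax_le_varPot {ρ : ℝ} (h0 : 0 ≤ ρ) (δ : ℕ → ℝ) (n : ℕ) :
    pathMax δ n ^ 2 ≤ varPot ρ δ n :=
  (sq_pathMax_le_doobPot δ n).trans (le_add_of_nonneg_right
    (tsum_nonneg fun m => mul_nonneg (pow_nonneg h0 m) (levelPot_nonneg δ m n)))

lemma totalJump_le_varPot {ρ : ℝ} (h0 : 0 ≤ ρ) (h1 : ρ < 1) (δ : ℕ → ℝ) (n : ℕ) :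
    totalJump ρ δ n ≤ varPot ρ δ n := by
  have h := (summable_jumpSq h0 h1 δ n).tsum_le_tsum
    (fun m => mul_le_mul_of_nonneg_left (jumpSq_le_levelPot δ m n) (pow_nonneg h0 m))
    (summable_levelPot h0 h1 δ n)
  exact h.trans (le_add_of_nonneg_left ((sq_nonneg _).trans (sq_pathMax_le_doobPot δ n)))

lemma totalJump_mono {ρ : ℝ} (h0 : 0 ≤ ρ) (h1 : ρ < 1) (δ : ℕ → ℝ) :
    Monotone (totalJump ρ δ) := fun _ _ h =>
  (summable_jumpSq h0 h1 δ _).tsum_le_tsum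
    (fun m => mul_le_mul_of_nonneg_left (jumpSq_mono δ m h) (pow_nonneg h0 m))
    (summable_jumpSq h0 h1 δ _)

/-- A linearized `r`-variation sum along a path is dominated by the square root of the potential:
Hölder's inequality over the windows `kk (m-1) ≤ K₀ - n < kk m`, and `rpow_increment_le` on each
of these disjoint windows. -/
lemma sq_sum_linCoeff_le {r : ℝ} (hr : 2 < r) {kk : ℤ → ℤ} (hk : StrictMono kk) (a : ℤ → ℝ)
    (ha : ∀ s : Finset ℤ, ∑ j ∈ s, |a j| ^ (r / (r - 1)) ≤ 1) (K₀ : ℤ) (δ : ℕ → ℝ) (N : ℕ) :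
    (∑ n ∈ Finset.range N, linCoeff kk a (K₀ - n) * δ n) ^ 2 ≤
      varConst r ^ (2 / r) * varPot ((1 / 2 : ℝ) ^ (r - 2)) δ N := by
  classical
  set ρ : ℝ := (1 / 2 : ℝ) ^ (r - 2) with hρ
  have h0 : 0 ≤ ρ := by positivity
  have h1 : ρ < 1 := Real.rpow_lt_one (by norm_num) (by norm_num) (by linarith)
  have hC : 0 ≤ varConst r := by unfold varConst; positivity
  have hMN := pathMax_nonneg δ N
  let W : ℤ → ℕ → Prop := fun m n => kk (m - 1) ≤ K₀ - n ∧ K₀ - n < kk m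
  let E : ℤ → Finset ℕ := fun m => (Finset.range N).filter (W m)
  let idx : ℕ → ℤ := fun n => if h : ∃ m, W m n then h.choose else 0
  let 𝓜 : Finset ℤ := (Finset.range N).image idx
  have huniq : ∀ {m m' : ℤ} {n : ℕ}, W m n → W m' n → m = m' := by
    intro m m' n h h'
    have l1 := hk.lt_iff_lt.1 (h.1.trans_lt h'.2)
    have l2 := hk.lt_iff_lt.1 (h'.1.trans_lt h.2)
    omega
  have hmem : ∀ {m : ℤ} {n : ℕ}, n < N → W m n → m ∈ 𝓜 := by
    intro m n hn h
    have hex : ∃ m, W m n := ⟨m, h⟩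
    refine Finset.mem_image.2 ⟨n, Finset.mem_range.2 hn, ?_⟩
    simp only [idx, dif_pos hex]
    exact huniq hex.choose_spec h
  have hsumW : ∀ n < N, ∀ b : ℤ → ℝ, ∀ c : ℝ, ∀ m, W m n →
      ∑ m' ∈ 𝓜, b m' * (if W m' n then c else 0) = b m * c := by
    intro n hn b c m hm
    rw [Finset.sum_eq_single_of_mem m (hmem hn hm), if_pos hm]
    intro m' _ hne
    rw [if_neg fun h => hne (huniq h hm), mul_zero]
  have hLHS : ∑ n ∈ Finset.range N, linCoeff kk a (K₀ - n) * δ n =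
      ∑ m ∈ 𝓜, a m * ∑ n ∈ E m, δ n := by
    simp only [E, Finset.sum_filter, Finset.mul_sum]
    rw [Finset.sum_comm]
    refine Finset.sum_congr rfl fun n hn => ?_
    by_cases hex : ∃ m, W m n
    · obtain ⟨m, hm⟩ := hex
      rw [hsumW n (Finset.mem_range.1 hn) a (δ n) m hm, linCoeff_eq hk a hm.1 hm.2]
    · rw [linCoeff_eq_zero a hex, zero_mul, Finset.sum_eq_zero]
      intro m _
      rw [if_neg fun h => hex ⟨m, h⟩, mul_zero]
  have hE : ∀ m, ∃ s t, s ≤ t ∧ t ≤ N ∧ E m = Finset.Ico s t := by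
    intro m
    have hlt : kk (m - 1) < kk m := hk (by omega)
    refine ⟨min N (K₀ - kk m + 1).toNat, min N (K₀ - kk (m - 1) + 1).toNat, ?_, ?_, ?_⟩
    · omega
    · omega
    · ext n
      simp only [E, W, Finset.mem_filter, Finset.mem_range, Finset.mem_Ico]
      omega
  let q : ℕ → ℝ := fun n => totalJump ρ δ (n + 1) - totalJump ρ δ n
  have hq : ∀ n, 0 ≤ q n := fun n => sub_nonneg.2 (totalJump_mono h0 h1 δ (Nat.le_succ n))
  have hA : 0 ≤ varConst r * pathMax δ N ^ (r - 2) := mul_nonneg hC (Real.rpow_nonneg hMN _)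
  have hEr : ∀ m, |∑ n ∈ E m, δ n| ^ r ≤
      varConst r * pathMax δ N ^ (r - 2) * ∑ n ∈ E m, q n := by
    intro m
    obtain ⟨s, t, hst, htN, he⟩ := hE m
    rw [he, Finset.sum_Ico_eq_sub _ hst, Finset.sum_Ico_eq_sub _ hst, Finset.sum_range_sub,
      Finset.sum_range_sub, sub_sub_sub_cancel_right]
    exact rpow_increment_le hr δ hst htN
  have hsumr : ∑ m ∈ 𝓜, |∑ n ∈ E m, δ n| ^ r ≤
      varConst r * pathMax δ N ^ (r - 2) * totalJump ρ δ N := by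
    calc ∑ m ∈ 𝓜, |∑ n ∈ E m, δ n| ^ r
        ≤ ∑ m ∈ 𝓜, varConst r * pathMax δ N ^ (r - 2) * ∑ n ∈ E m, q n :=
          Finset.sum_le_sum fun m _ => hEr m
      _ = varConst r * pathMax δ N ^ (r - 2) * ∑ m ∈ 𝓜, ∑ n ∈ E m, q n := by
          rw [Finset.mul_sum]
      _ ≤ varConst r * pathMax δ N ^ (r - 2) * ∑ n ∈ Finset.range N, q n := by
          refine mul_le_mul_of_nonneg_left ?_ hA
          simp only [E, Finset.sum_filter]
          rw [Finset.sum_comm]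
          refine Finset.sum_le_sum fun n hn => ?_
          by_cases hex : ∃ m, W m n
          · obtain ⟨m, hm⟩ := hex
            have := hsumW n (Finset.mem_range.1 hn) (fun _ => 1) (q n) m hm
            simp only [one_mul] at this
            exact this.le
          · rw [Finset.sum_eq_zero fun m _ => if_neg fun h => hex ⟨m, h⟩]
            exact hq n
      _ = varConst r * pathMax δ N ^ (r - 2) * totalJump ρ δ N := by
          rw [Finset.sum_range_sub]
          simp [totalJump, jumpSq]
  set Z := varPot ρ δ N with hZ
  have hMZ : pathMax δ N ^ 2 ≤ Z := sq_pathMax_le_varPot h0 δ N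
  have hZ0 : 0 ≤ Z := (sq_nonneg _).trans hMZ
  have hM' : pathMax δ N ^ (r - 2) ≤ Z ^ ((r - 2) / 2) := by
    calc pathMax δ N ^ (r - 2) = (pathMax δ N ^ 2) ^ ((r - 2) / 2) := by
          rw [← Real.rpow_natCast, ← Real.rpow_mul hMN]
          congr 1
          push_cast
          ring
      _ ≤ _ := Real.rpow_le_rpow (sq_nonneg _) hMZ (by linarith)
  have hbound : varConst r * pathMax δ N ^ (r - 2) * totalJump ρ δ N ≤
      varConst r * Z ^ (r / 2) := by
    have hz : Z ^ (r / 2) = Z ^ ((r - 2) / 2) * Z := by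
      rw [show r / 2 = (r - 2) / 2 + 1 by ring,
        Real.rpow_add_one' hZ0 (by linarith)]
    rw [hz, mul_assoc]
    refine mul_le_mul_of_nonneg_left ?_ hC
    refine mul_le_mul hM' (totalJump_le_varPot h0 h1 δ N) ?_ (Real.rpow_nonneg hZ0 _)
    exact tsum_nonneg fun m => mul_nonneg (pow_nonneg h0 m) (jumpSq_nonneg δ m N)
  have hpq : (r / (r - 1)).HolderConjugate r :=
    (Real.HolderConjugate.conjExponent (by linarith : (1 : ℝ) < r)).symm
  have hH : |∑ m ∈ 𝓜, a m * ∑ n ∈ E m, δ n| ≤ (varConst r * Z ^ (r / 2)) ^ (1 / r) := by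
    calc |∑ m ∈ 𝓜, a m * ∑ n ∈ E m, δ n|
        ≤ ∑ m ∈ 𝓜, |a m| * |∑ n ∈ E m, δ n| := by
          simpa only [abs_mul] using Finset.abs_sum_le_sum_abs (fun m => a m * ∑ n ∈ E m, δ n) 𝓜
      _ ≤ (∑ m ∈ 𝓜, |a m| ^ (r / (r - 1))) ^ (1 / (r / (r - 1))) *
          (∑ m ∈ 𝓜, |∑ n ∈ E m, δ n| ^ r) ^ (1 / r) := by
          simpa only [abs_abs] using
            Real.inner_le_Lp_mul_Lq 𝓜 (fun m => |a m|) (fun m => |∑ n ∈ E m, δ n|) hpq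
      _ ≤ 1 * (varConst r * Z ^ (r / 2)) ^ (1 / r) := by
          refine mul_le_mul ?_ ?_ ?_ zero_le_one
          · exact Real.rpow_le_one (Finset.sum_nonneg fun _ _ => by positivity) (ha 𝓜)
              (one_div_nonneg.2 hpq.nonneg)
          · exact Real.rpow_le_rpow (Finset.sum_nonneg fun _ _ => by positivity)
              (hsumr.trans hbound) (by positivity)
          · exact Real.rpow_nonneg (Finset.sum_nonneg fun _ _ => by positivity) _
      _ = _ := one_mul _
  rw [hLHS, ← sq_abs]
  refine (pow_le_pow_left₀ (abs_nonneg _) hH 2).trans (le_of_eq ?_)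
  have hr0 : r ≠ 0 := by linarith
  rw [Real.mul_rpow hC (Real.rpow_nonneg hZ0 _), mul_pow, ← Real.rpow_mul hZ0,
    ← Real.rpow_natCast, ← Real.rpow_natCast, ← Real.rpow_mul hC, ← Real.rpow_mul hZ0,
    show r / 2 * (1 / r) * ((2 : ℕ) : ℝ) = 1 by push_cast; field_simp, Real.rpow_one,
    show 1 / r * ((2 : ℕ) : ℝ) = 2 / r by push_cast; ring]

lemma sq_sum_le_varPot {ρ : ℝ} (h0 : 0 ≤ ρ) (δ : ℕ → ℝ) (N : ℕ) :
    (∑ n ∈ Finset.range N, δ n) ^ 2 ≤ varPot ρ δ N := by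
  refine le_trans ?_ (sq_pathMax_le_varPot h0 δ N)
  rw [← sq_abs]
  exact pow_le_pow_left₀ (abs_nonneg _) (abs_pathSum_le δ N) 2

/-! ### Dyadic cells -/

/-- Parity sign of the dyadic cell of length `2^k` containing `x` (a Rademacher function). -/
noncomputable def cellSign (k : ℤ) (x : ℝ) : ℝ := (-1 : ℝ) ^ ⌊x / 2 ^ k⌋

lemma cellSign_mul_self (k : ℤ) (x : ℝ) : cellSign k x * cellSign k x = 1 := by
  rw [cellSign, ← mul_zpow]; norm_num

lemma mem_dyadicPiece {k : ℤ} {x y : ℝ} : y ∈ dyadicPiece k x ↔ ⌊y / 2 ^ k⌋ = ⌊x / 2 ^ k⌋ := by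
  have h : (0 : ℝ) < 2 ^ k := by positivity
  rw [dyadicPiece, Set.mem_Ico, Int.floor_eq_iff, le_div_iff₀ h, div_lt_iff₀ h]

lemma self_mem_dyadicPiece (k : ℤ) (x : ℝ) : x ∈ dyadicPiece k x := mem_dyadicPiece.2 rfl

lemma dyadicPiece_eq {k : ℤ} {x y : ℝ} (h : ⌊y / 2 ^ k⌋ = ⌊x / 2 ^ k⌋) :
    dyadicPiece k y = dyadicPiece k x := by
  rw [dyadicPiece, dyadicPiece, h]

lemma floor_coarsen {k l : ℤ} (hkl : k ≤ l) (x : ℝ) :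
    ⌊x / 2 ^ l⌋ = ⌊x / 2 ^ k⌋ / 2 ^ (l - k).toNat := by
  obtain ⟨n, rfl⟩ := Int.le.dest hkl
  have h := Int.floor_div_natCast (x / 2 ^ k) (2 ^ n)
  rw [add_sub_cancel_left, Int.toNat_natCast]
  rw [zpow_add₀ (by norm_num : (2 : ℝ) ≠ 0), ← div_div]
  simpa using h

lemma floor_eq_coarsen {k l : ℤ} (hkl : k ≤ l) {x y : ℝ} (h : ⌊y / 2 ^ k⌋ = ⌊x / 2 ^ k⌋) :
    ⌊y / 2 ^ l⌋ = ⌊x / 2 ^ l⌋ := by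
  rw [floor_coarsen hkl, floor_coarsen hkl, h]

lemma dyadicPiece_subset {k l : ℤ} (hkl : k ≤ l) {x y : ℝ} (h : y ∈ dyadicPiece l x) :
    dyadicPiece k y ⊆ dyadicPiece l x := fun _ hz =>
  mem_dyadicPiece.2 ((floor_eq_coarsen hkl (mem_dyadicPiece.1 hz)).trans (mem_dyadicPiece.1 h))

lemma cellSign_eq {k l : ℤ} (hkl : k ≤ l) {x y : ℝ} (h : ⌊y / 2 ^ k⌋ = ⌊x / 2 ^ k⌋) :
    cellSign l y = cellSign l x := by
  rw [cellSign, cellSign, floor_eq_coarsen hkl h]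

lemma measurableSet_dyadicPiece (k : ℤ) (x : ℝ) : MeasurableSet (dyadicPiece k x) :=
  measurableSet_Ico

lemma volume_dyadicPiece (k : ℤ) (x : ℝ) :
    volume (dyadicPiece k x) = ENNReal.ofReal (2 ^ k) := by
  rw [dyadicPiece, Real.volume_Ico]
  congr 1
  ring

lemma volume_real_dyadicPiece (k : ℤ) (x : ℝ) : volume.real (dyadicPiece k x) = 2 ^ k := by
  rw [Measure.real, volume_dyadicPiece, ENNReal.toReal_ofReal (by positivity)]

/-- Every cell is the disjoint union of two half cells, on which `cellSign` takes opposite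
values. -/
lemma dyadicPiece_split (k : ℤ) (x : ℝ) : ∃ y z, y ∈ dyadicPiece k x ∧ z ∈ dyadicPiece k x ∧
    dyadicPiece k x = dyadicPiece (k - 1) y ∪ dyadicPiece (k - 1) z ∧
    Disjoint (dyadicPiece (k - 1) y) (dyadicPiece (k - 1) z) ∧
    cellSign (k - 1) z = - cellSign (k - 1) y := by
  have hpos : (0 : ℝ) < 2 ^ (k - 1) := by positivity
  have hfl : ∀ q : ℤ, ⌊((q : ℝ) * 2 ^ (k - 1)) / 2 ^ (k - 1)⌋ = q := by
    intro q
    rw [mul_div_cancel_right₀ _ hpos.ne', Int.floor_intCast]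
  have hco : ∀ u : ℝ, ⌊u / 2 ^ k⌋ = ⌊u / 2 ^ (k - 1)⌋ / 2 := by
    intro u
    rw [floor_coarsen (by omega : k - 1 ≤ k)]
    norm_num
  set q := ⌊x / 2 ^ k⌋ with hq
  refine ⟨((2 * q : ℤ) : ℝ) * 2 ^ (k - 1), ((2 * q + 1 : ℤ) : ℝ) * 2 ^ (k - 1), ?_, ?_, ?_, ?_, ?_⟩
  · rw [mem_dyadicPiece, hco, hfl, ← hq]; omega
  · rw [mem_dyadicPiece, hco, hfl, ← hq]; omega
  · ext u
    rw [Set.mem_union, mem_dyadicPiece, mem_dyadicPiece, mem_dyadicPiece, hfl, hfl, hco u, ← hq]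
    omega
  · rw [Set.disjoint_left]
    intro u h1 h2
    rw [mem_dyadicPiece, hfl] at h1 h2
    omega
  · rw [cellSign, cellSign, hfl, hfl, zpow_add₀ (by norm_num : (-1 : ℝ) ≠ 0)]
    ring

/-! ### The estimate for a dyadic martingale -/

/-- The increments up to level `n` are constant on the cells of level `n`. -/
lemma increments_eq {k₀ : ℤ} {D : ℝ → ℕ → ℝ}
    (hflip : ∀ x y (n : ℕ), y ∈ dyadicPiece (k₀ - n) x →
      D y n * cellSign (k₀ - n - 1) y = D x n * cellSign (k₀ - n - 1) x)
    {x y : ℝ} {n : ℕ} (hy : y ∈ dyadicPiece (k₀ - n) x) : ∀ j < n, D y j = D x j := by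
  intro j hj
  have h1 := mem_dyadicPiece.1 hy
  have h2 := hflip x y j (mem_dyadicPiece.2 (floor_eq_coarsen (by omega) h1))
  rw [cellSign_eq (by omega) h1] at h2
  refine mul_right_cancel₀ ?_ h2
  intro h0
  simpa [h0] using cellSign_mul_self (k₀ - j - 1) x

/-- Integral estimate for `G = f F`, where `F` is a linearized variation of the dyadic martingale
on `dyadicPiece k₀ x₀` with increments `D x n`.  The hypothesis `hflip` says that `D · n` is a
multiple of the Haar function on each cell of level `n`.  On each cell, either `F` is bounded by
the potential of the history of that cell, or `|f|` has controlled averages over both halves. -/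
lemma integral_le_of_martingale {ρ C₀ lam : ℝ} (h0 : 0 ≤ ρ) (h1 : ρ < 1) (hC₀ : 0 ≤ C₀)
    (k₀ : ℤ) (x₀ : ℝ) (D : ℝ → ℕ → ℝ) (N : ℕ) (f G : ℝ → ℝ)
    (hflip : ∀ x y (n : ℕ), y ∈ dyadicPiece (k₀ - n) x →
      D y n * cellSign (k₀ - n - 1) y = D x n * cellSign (k₀ - n - 1) x)
    (hf : IntegrableOn f (dyadicPiece k₀ x₀)) (hG : IntegrableOn G (dyadicPiece k₀ x₀))
    (hD : ∀ n, IntegrableOn (fun x => D x n ^ 2) (dyadicPiece k₀ x₀))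
    (halt : ∀ x ∈ dyadicPiece k₀ x₀, ∀ n : ℕ,
      (∀ y ∈ dyadicPiece (k₀ - n) x, |G y| ≤ |f y| * √(C₀ * varPot ρ (D x) n)) ∨
      (n < N ∧ ∀ y ∈ dyadicPiece (k₀ - n) x,
        ∫ z in dyadicPiece (k₀ - n - 1) y, |f z| ≤ 4 * lam * 2 ^ (k₀ - n - 1)))
    (htop : ∫ z in dyadicPiece k₀ x₀, |f z| ≤ 4 * lam * 2 ^ k₀) :
    ∫ z in dyadicPiece k₀ x₀, |G z| ≤
      (1 / 2) * (∫ z in dyadicPiece k₀ x₀, ∑ j ∈ Finset.range N, D z j ^ 2) +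
        8 * lam ^ 2 * C₀ * (4 + ∑' m : ℕ, ρ ^ m) * 2 ^ k₀ := by
  set C₁ : ℝ := 4 + ∑' m : ℕ, ρ ^ m with hC₁
  have hC₁0 : 0 < C₁ := by
    have : 0 ≤ ∑' m : ℕ, ρ ^ m := tsum_nonneg fun m => pow_nonneg h0 m
    linarith
  have claim : ∀ d n : ℕ, N ≤ n + d → ∀ x ∈ dyadicPiece k₀ x₀,
      ∫ z in dyadicPiece (k₀ - n) x, |f z| ≤ 4 * lam * 2 ^ (k₀ - n) →
      ∫ z in dyadicPiece (k₀ - n) x, |G z| ≤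
        1 / (2 * C₁) * (varPot ρ (D x) n * 2 ^ (k₀ - n) +
          C₁ * ∫ z in dyadicPiece (k₀ - n) x, ∑ j ∈ Finset.Ico n N, D z j ^ 2) +
        8 * lam ^ 2 * C₀ * C₁ * 2 ^ (k₀ - n) := by
    -- A cell on which `F` is controlled by the potential: AM-GM.
    have hbase : ∀ (n : ℕ), ∀ x ∈ dyadicPiece k₀ x₀,
        ∫ z in dyadicPiece (k₀ - n) x, |f z| ≤ 4 * lam * 2 ^ (k₀ - n) →
        (∀ y ∈ dyadicPiece (k₀ - n) x, |G y| ≤ |f y| * √(C₀ * varPot ρ (D x) n)) →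
        ∫ z in dyadicPiece (k₀ - n) x, |G z| ≤
        1 / (2 * C₁) * (varPot ρ (D x) n * 2 ^ (k₀ - n) +
          C₁ * ∫ z in dyadicPiece (k₀ - n) x, ∑ j ∈ Finset.Ico n N, D z j ^ 2) +
        8 * lam ^ 2 * C₀ * C₁ * 2 ^ (k₀ - n) := by
      intro n x hx hfx hGx
      have hsub : dyadicPiece (k₀ - n) x ⊆ dyadicPiece k₀ x₀ := dyadicPiece_subset (by omega) hx
      set U := varPot ρ (D x) n with hU
      have hU0 : 0 ≤ U := (sq_nonneg _).trans (sq_pathMax_le_varPot h0 (D x) n)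
      set V := √(C₀ * U) with hV
      have hV0 : 0 ≤ V := Real.sqrt_nonneg _
      have hVsq : V ^ 2 = C₀ * U := Real.sq_sqrt (mul_nonneg hC₀ hU0)
      have hGle : ∫ z in dyadicPiece (k₀ - n) x, |G z| ≤ 4 * lam * 2 ^ (k₀ - n) * V := by
        calc ∫ z in dyadicPiece (k₀ - n) x, |G z|
            ≤ ∫ z in dyadicPiece (k₀ - n) x, |f z| * V :=
              setIntegral_mono_on (hG.mono_set hsub).abs ((hf.mono_set hsub).abs.mul_const V)
                (measurableSet_dyadicPiece _ _) hGx
          _ = (∫ z in dyadicPiece (k₀ - n) x, |f z|) * V := integral_mul_const _ _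
          _ ≤ _ := mul_le_mul_of_nonneg_right hfx hV0
      have hE : 0 ≤ ∫ z in dyadicPiece (k₀ - n) x, ∑ j ∈ Finset.Ico n N, D z j ^ 2 :=
        integral_nonneg fun z => Finset.sum_nonneg fun j _ => sq_nonneg _
      have hL : (0 : ℝ) < 2 ^ (k₀ - n) := by positivity
      have hamgm : 4 * lam * V ≤ 1 / (2 * C₁) * U + 8 * lam ^ 2 * C₀ * C₁ := by
        rcases eq_or_lt_of_le hC₀ with hz | hp
        · have : V = 0 := by rw [hV, ← hz, zero_mul, Real.sqrt_zero]
          rw [this, ← hz]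
          simp only [mul_zero, zero_mul, add_zero]
          positivity
        · have e : 1 / (2 * C₁) * U = V ^ 2 / (2 * C₁ * C₀) := by
            rw [hVsq]; field_simp
          rw [e, ← sub_nonneg]
          have : V ^ 2 / (2 * C₁ * C₀) + 8 * lam ^ 2 * C₀ * C₁ - 4 * lam * V =
              (V - 4 * lam * C₁ * C₀) ^ 2 / (2 * C₁ * C₀) := by
            field_simp
            ring
          rw [this]
          positivity
      have h3 := mul_le_mul_of_nonneg_right hamgm hL.le
      have h4 : 0 ≤ 1 / (2 * C₁) *
          (C₁ * ∫ z in dyadicPiece (k₀ - n) x, ∑ j ∈ Finset.Ico n N, D z j ^ 2) := by positivity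
      linarith
    intro d
    induction d with
    | zero =>
      intro n hn x hx hfx
      rcases halt x hx n with h | h
      · exact hbase n x hx hfx h
      · omega
    | succ d ih =>
      intro n hn x hx hfx
      rcases halt x hx n with h | ⟨hnN, h⟩
      · exact hbase n x hx hfx h
      obtain ⟨y, z, hy, hz, hun, hdisj, hsgn⟩ := dyadicPiece_split (k₀ - n) x
      have hsub : dyadicPiece (k₀ - n) x ⊆ dyadicPiece k₀ x₀ := dyadicPiece_subset (by omega) hx
      have hk : k₀ - ((n + 1 : ℕ) : ℤ) = k₀ - n - 1 := by push_cast; ring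
      have ihy := ih (n + 1) (by omega) y (hsub hy) (by rw [hk]; exact h y hy)
      have ihz := ih (n + 1) (by omega) z (hsub hz) (by rw [hk]; exact h z hz)
      rw [hk] at ihy ihz
      have hsuby : dyadicPiece (k₀ - n - 1) y ⊆ dyadicPiece k₀ x₀ :=
        (dyadicPiece_subset (by omega) hy).trans hsub
      have hsubz : dyadicPiece (k₀ - n - 1) z ⊆ dyadicPiece k₀ x₀ :=
        (dyadicPiece_subset (by omega) hz).trans hsub
      have hsumint : ∀ s : Finset ℕ, IntegrableOn (fun u => ∑ j ∈ s, D u j ^ 2)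
          (dyadicPiece k₀ x₀) := fun s => integrable_finsetSum s fun j _ => hD j
      have hGsplit : ∫ u in dyadicPiece (k₀ - n) x, |G u| =
          (∫ u in dyadicPiece (k₀ - n - 1) y, |G u|) +
            ∫ u in dyadicPiece (k₀ - n - 1) z, |G u| := by
        rw [hun]
        exact setIntegral_union hdisj (measurableSet_dyadicPiece _ _)
          (hG.mono_set hsuby).abs (hG.mono_set hsubz).abs
      have hEsplit : ∫ u in dyadicPiece (k₀ - n) x, ∑ j ∈ Finset.Ico (n + 1) N, D u j ^ 2 =
          (∫ u in dyadicPiece (k₀ - n - 1) y, ∑ j ∈ Finset.Ico (n + 1) N, D u j ^ 2) +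
          ∫ u in dyadicPiece (k₀ - n - 1) z, ∑ j ∈ Finset.Ico (n + 1) N, D u j ^ 2 := by
        rw [hun]
        exact setIntegral_union hdisj (measurableSet_dyadicPiece _ _)
          ((hsumint _).mono_set hsuby) ((hsumint _).mono_set hsubz)
      have hsq : ∀ u ∈ dyadicPiece (k₀ - n) x, D u n ^ 2 = D x n ^ 2 := by
        intro u hu
        have e := congrArg (fun t => t ^ 2) (hflip x u n hu)
        simpa only [mul_pow, pow_two (cellSign _ _), cellSign_mul_self, mul_one] using e
      have hEn : ∫ u in dyadicPiece (k₀ - n) x, ∑ j ∈ Finset.Ico n N, D u j ^ 2 =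
          D x n ^ 2 * 2 ^ (k₀ - n) +
          ∫ u in dyadicPiece (k₀ - n) x, ∑ j ∈ Finset.Ico (n + 1) N, D u j ^ 2 := by
        have e : ∀ u, ∑ j ∈ Finset.Ico n N, D u j ^ 2 =
            D u n ^ 2 + ∑ j ∈ Finset.Ico (n + 1) N, D u j ^ 2 := fun u =>
          Finset.sum_eq_sum_Ico_succ_bot hnN _
        simp_rw [e]
        rw [integral_add ((hD n).mono_set hsub) ((hsumint _).mono_set hsub),
          setIntegral_congr_fun (measurableSet_dyadicPiece _ _) hsq, setIntegral_const,
          volume_real_dyadicPiece, smul_eq_mul, mul_comm]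
      have hpre : ∀ j < n, D y j = D z j := fun j hj =>
        (increments_eq hflip hy j hj).trans (increments_eq hflip hz j hj).symm
      have hopp : D z n = - D y n := by
        have e := (hflip x z n hz).trans (hflip x y n hy).symm
        rw [hsgn] at e
        have hs := cellSign_mul_self (k₀ - n - 1) y
        linear_combination (-cellSign (k₀ - n - 1) y) * e - (D z n + D y n) * hs
      have havg := varPot_avg h0 h1 hpre hopp
      rw [varPot_congr (increments_eq hflip hy), hsq y hy] at havg
      have hL : (2 : ℝ) ^ (k₀ - n) = 2 * 2 ^ (k₀ - n - 1) := by
        rw [zpow_sub_one₀ (by norm_num)]; ring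
      rw [hGsplit, hEn, hEsplit, hL]
      have hLp : (0 : ℝ) < 2 ^ (k₀ - n - 1) := by positivity
      have h6 := mul_le_mul_of_nonneg_left havg
        (by positivity : 0 ≤ 1 / (2 * C₁) * (2 : ℝ) ^ (k₀ - n - 1))
      rw [← hC₁] at h6
      linarith
  have hx₀ := claim N 0 (by omega) x₀ (self_mem_dyadicPiece _ _) (by simpa using htop)
  rw [varPot_zero] at hx₀
  simp only [Nat.cast_zero, sub_zero, zero_mul, zero_add] at hx₀
  rw [← Finset.range_eq_Ico] at hx₀
  refine hx₀.trans (le_of_eq ?_)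
  field_simp

/-! ### Walsh wave packets on a tree -/

/-- The Walsh character `∏ (±1)` whose frequency has the binary digits of `m · 2^{-k}`, written
with absolute cell signs; on a dyadic interval of length `2^k` it is the Walsh function of
index `m`. -/
noncomputable def toneSign (k : ℤ) (m : ℕ) (x : ℝ) : ℝ :=
  ∏ i ∈ Finset.range m, if m.testBit i then cellSign (k - (i + 1)) x else 1

lemma walshF_eq_toneSign (I : DyadicInterval) (m : ℕ) (x : ℝ) :
    walshF m ((x - I.lo) / I.len) = toneSign I.k m x := by
  refine Finset.prod_congr rfl fun i _ => ?_
  split_ifs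
  · have e : (x - I.lo) / I.len * 2 ^ (i + 1) =
        x / 2 ^ (I.k - (i + 1)) - ((I.n * 2 ^ (i + 1) : ℤ) : ℝ) := by
      have h2 : (2 : ℝ) ^ (I.k - (i + 1)) = 2 ^ I.k / 2 ^ (i + 1) := by
        rw [zpow_sub₀ (by norm_num : (2 : ℝ) ≠ 0)]
        norm_cast
      rw [DyadicInterval.lo, DyadicInterval.len, h2]
      push_cast
      field_simp
    rw [e, Int.floor_sub_intCast, cellSign, zpow_sub₀ (by norm_num : (-1 : ℝ) ≠ 0)]
    have hev : Even ((I.n : ℤ) * 2 ^ (i + 1)) := by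
      rw [pow_succ]
      exact ⟨I.n * 2 ^ i, by ring⟩
    rw [hev.neg_one_zpow, div_one]
  · rfl

lemma toneSign_eq_prod {m R : ℕ} (h : m ≤ R) (k : ℤ) (x : ℝ) :
    toneSign k m x =
      ∏ i ∈ Finset.range R, if m.testBit i then cellSign (k - (i + 1)) x else 1 := by
  refine Finset.prod_subset (Finset.range_subset_range.2 h) fun i _ hi => ?_
  rw [if_neg]
  rw [Finset.mem_range, not_lt] at hi
  rw [Nat.testBit_lt_two_pow (hi.trans_lt Nat.lt_two_pow_self)]
  simp

lemma toneSign_mul_self (k : ℤ) (m : ℕ) (x : ℝ) : toneSign k m x * toneSign k m x = 1 := by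
  rw [toneSign, ← Finset.prod_mul_distrib]
  refine Finset.prod_eq_one fun i _ => ?_
  split_ifs
  · exact cellSign_mul_self _ _
  · norm_num

lemma mem_toSet {I : DyadicInterval} {x : ℝ} : x ∈ I.toSet ↔ ⌊x / 2 ^ I.k⌋ = (I.n : ℤ) := by
  have h : (0 : ℝ) < 2 ^ I.k := by positivity
  rw [DyadicInterval.toSet, DyadicInterval.lo, DyadicInterval.len, Set.mem_Ico, Int.floor_eq_iff,
    le_div_iff₀ h, div_lt_iff₀ h]
  push_cast
  rw [add_mul, one_mul]

lemma toSet_eq_dyadicPiece {I : DyadicInterval} {x : ℝ} (hx : x ∈ I.toSet) :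
    I.toSet = dyadicPiece I.k x := by
  ext y
  rw [mem_toSet, mem_dyadicPiece, mem_toSet.1 hx]

lemma lo_mem_toSet (I : DyadicInterval) : I.lo ∈ I.toSet :=
  ⟨le_rfl, lt_add_of_pos_right _ (by rw [DyadicInterval.len]; positivity)⟩

lemma k_le_of_subset {I : DyadicInterval} {k : ℤ} {x : ℝ} (h : I.toSet ⊆ dyadicPiece k x) :
    I.k ≤ k := by
  rw [toSet_eq_dyadicPiece (lo_mem_toSet I)] at h
  have hm := measure_mono (μ := volume) h
  rw [volume_dyadicPiece, volume_dyadicPiece, ENNReal.ofReal_le_ofReal_iff (by positivity)] at hm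
  exact (zpow_le_zpow_iff_right₀ (by norm_num : (1 : ℝ) < 2)).1 hm

lemma testBit_high {N a b : ℕ} (ha : a < 4) (hb : b < 4) {i : ℕ} (hi : 2 ≤ i) :
    (4 * N + a).testBit i = (4 * N + b).testBit i := by
  obtain ⟨c, rfl⟩ := Nat.exists_eq_add_of_le' hi
  rw [← Nat.testBit_div_two_pow, ← Nat.testBit_div_two_pow,
    show (4 * N + a) / 2 ^ 2 = N by omega, show (4 * N + b) / 2 ^ 2 = N by omega]

/-- Position of the most significant bit in which the indices of the subtiles `P_{i+1}` and
`P_{j+1}` differ (for `i ≠ j`). -/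
def lacShift (i j : Fin 4) : ℕ := if i.val / 2 = j.val / 2 then 0 else 1

lemma lacShift_le (i j : Fin 4) : lacShift i j ≤ 1 := by
  unfold lacShift; split_ifs <;> omega

lemma testBit_gt_lacShift (N : ℕ) (i j : Fin 4) {b : ℕ} (hb : lacShift i j < b) :
    (4 * N + i.val).testBit b = (4 * N + j.val).testBit b := by
  rcases Nat.lt_or_ge b 2 with h | h
  · unfold lacShift at hb
    split_ifs at hb with hc
    · obtain rfl : b = 1 := by omega
      rw [Nat.testBit_succ, Nat.testBit_succ,
        show (4 * N + i.val) / 2 = (4 * N + j.val) / 2 by omega]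
    · omega
  · exact testBit_high i.isLt j.isLt h

lemma testBit_lacShift (N : ℕ) {i j : Fin 4} (hij : j ≠ i) :
    (4 * N + i.val).testBit (lacShift i j) = !(4 * N + j.val).testBit (lacShift i j) := by
  have hi := i.isLt
  have hj := j.isLt
  have hne : i.val ≠ j.val := fun h => hij (Fin.ext h.symm)
  unfold lacShift
  split_ifs with hc
  · rw [Nat.testBit_zero, Nat.testBit_zero, ← decide_not, decide_eq_decide]
    omega
  · rw [Nat.testBit_succ, Nat.testBit_succ, Nat.testBit_zero, Nat.testBit_zero, ← decide_not,
      decide_eq_decide]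
    omega

lemma wp_eq {P : Quartile} (i : Fin 4) {x : ℝ} (hx : x ∈ P.I.toSet) :
    P.wp i x = P.I.len ^ (-(1 : ℝ) / 2) * toneSign P.I.k (4 * P.ω.n + i.val) x := by
  rw [Quartile.wp, wavePacket, Set.indicator_of_mem hx, walshF_eq_toneSign]
  rfl

lemma wp_eq_zero {P : Quartile} (i : Fin 4) {x : ℝ} (hx : x ∉ P.I.toSet) : P.wp i x = 0 := by
  rw [Quartile.wp, wavePacket, Set.indicator_of_notMem hx]

lemma wp_sq (P : Quartile) (i : Fin 4) (x : ℝ) :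
    P.wp i x ^ 2 = P.I.toSet.indicator (fun _ => (P.I.len)⁻¹) x := by
  by_cases hx : x ∈ P.I.toSet
  · have hl : 0 < P.I.len := by rw [DyadicInterval.len]; positivity
    rw [wp_eq i hx, Set.indicator_of_mem hx, mul_pow, pow_two (toneSign _ _ _),
      toneSign_mul_self, mul_one, ← Real.rpow_natCast, ← Real.rpow_mul hl.le,
      ← Real.rpow_neg_one]
    norm_num
  · rw [wp_eq_zero i hx, Set.indicator_of_notMem hx]
    norm_num

/-- After modulation by the Walsh character at the top frequency of the tree, the wave packet of
`P_{i+1}` becomes a multiple of the Haar function on each cell of length `2^{-s} |I_P|`, where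
`s = lacShift i j`. -/
lemma modulated_wp_flip {i j : Fin 4} (hij : j ≠ i) {P : Quartile} {ξ : ℝ} {k₀ : ℤ}
    (hk : P.I.k ≤ k₀) (hξ : ξ ∈ (P.freq j).toSet) {x y : ℝ}
    (hxy : ⌊y / 2 ^ (P.I.k - lacShift i j)⌋ = ⌊x / 2 ^ (P.I.k - lacShift i j)⌋) :
    toneSign k₀ ⌊ξ * 2 ^ k₀⌋₊ y * P.wp i y * cellSign (P.I.k - lacShift i j - 1) y =
      toneSign k₀ ⌊ξ * 2 ^ k₀⌋₊ x * P.wp i x * cellSign (P.I.k - lacShift i j - 1) x := by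
  set s := lacShift i j with hs
  set m := ⌊ξ * 2 ^ k₀⌋₊ with hm
  set N := P.ω.n with hN
  obtain ⟨n, hn⟩ := Int.le.dest hk
  have hmem : y ∈ P.I.toSet ↔ x ∈ P.I.toSet := by
    rw [mem_toSet, mem_toSet, floor_eq_coarsen (by omega) hxy]
  by_cases hx : x ∈ P.I.toSet
  swap
  · rw [wp_eq_zero i hx, wp_eq_zero i (fun h => hx (hmem.1 h))]
    simp
  have hy := hmem.2 hx
  -- the index of `P_{j+1}` is obtained from `m` by deleting the lowest `n` bits
  have hidx : 4 * N + j.val = m / 2 ^ n := by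
    have h1 := mem_toSet.1 hξ
    have h2 : (P.freq j).k = -P.I.k := by
      have := P.area
      simp only [Quartile.freq]
      omega
    rw [h2, zpow_neg, div_inv_eq_mul] at h1
    have h3 : ⌊ξ * 2 ^ P.I.k⌋₊ = 4 * N + j.val := by
      rw [← Int.floor_toNat, h1]
      exact Int.toNat_natCast _
    rw [← h3, hm, ← Nat.floor_div_natCast]
    congr 1
    rw [← hn, zpow_add₀ (by norm_num : (2 : ℝ) ≠ 0), zpow_natCast]
    push_cast
    field_simp
  have hbit : ∀ b, m.testBit (n + b) = (4 * N + j.val).testBit b := by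
    intro b
    rw [hidx, Nat.testBit_div_two_pow, add_comm]
  set R := m + (4 * N + 4) + 2 with hR
  -- the product of the two characters, bit by bit
  let B : ℕ → ℝ → ℝ := fun b u =>
    (if (4 * N + j.val).testBit b then cellSign (P.I.k - (b + 1)) u else 1) *
      (if (4 * N + i.val).testBit b then cellSign (P.I.k - (b + 1)) u else 1)
  let A : ℝ → ℝ := fun u =>
    ∏ b ∈ Finset.range n, if m.testBit b then cellSign (k₀ - (b + 1)) u else 1
  have hform : ∀ u ∈ P.I.toSet, toneSign k₀ m u * P.wp i u =
      P.I.len ^ (-(1 : ℝ) / 2) * (A u * ∏ b ∈ Finset.range R, B b u) := by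
    intro u hu
    rw [wp_eq i hu, toneSign_eq_prod (by omega : m ≤ n + R), Finset.prod_range_add,
      toneSign_eq_prod (by have := i.isLt; omega : 4 * N + i.val ≤ R), Finset.prod_mul_distrib]
    have e : ∏ b ∈ Finset.range R,
        (if m.testBit (n + b) then cellSign (k₀ - ((n + b : ℕ) + 1)) u else 1) =
        ∏ b ∈ Finset.range R,
          (if (4 * N + j.val).testBit b then cellSign (P.I.k - (b + 1)) u else 1) := by
      refine Finset.prod_congr rfl fun b _ => ?_
      rw [hbit, show k₀ - (((n + b : ℕ) : ℤ) + 1) = P.I.k - (b + 1) by push_cast; omega]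
    rw [e]
    ring
  have hA : A y = A x := by
    refine Finset.prod_congr rfl fun b hb => ?_
    rw [cellSign_eq (by have := Finset.mem_range.1 hb; omega) hxy]
  have hsR : s ∈ Finset.range R := by
    have := lacShift_le i j
    rw [Finset.mem_range]
    omega
  have hB : ∀ b ∈ (Finset.range R).erase s, B b y = B b x := by
    intro b hb
    have hbs := Finset.ne_of_mem_erase hb
    rcases lt_or_gt_of_ne hbs with h | h
    · simp only [B]
      rw [cellSign_eq (by omega) hxy]
    · simp only [B]
      rw [testBit_gt_lacShift N i j h]
      split_ifs
      · rw [cellSign_mul_self, cellSign_mul_self]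
      · rfl
  have hBs : ∀ u, B s u * cellSign (P.I.k - s - 1) u = 1 := by
    intro u
    have e : P.I.k - ((s : ℤ) + 1) = P.I.k - s - 1 := by ring
    simp only [B]
    rw [testBit_lacShift N hij, e]
    cases (4 * N + j.val).testBit (lacShift i j) <;> simp [cellSign_mul_self]
  rw [hform y hy, hform x hx, hA, ← Finset.mul_prod_erase _ _ hsR, ← Finset.mul_prod_erase _ _ hsR,
    Finset.prod_congr rfl hB]
  linear_combination (P.I.len ^ (-(1 : ℝ) / 2) * A x * ∏ b ∈ (Finset.range R).erase s, B b x) *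
    (hBs y - hBs x)

/-! ### Averages below the maximal function -/

/-- Hölder's inequality passes from the `L^t` maximal function to `L^1` averages. -/
lemma integral_le_of_maxOp_le {t lam : ℝ} (ht : 1 < t) (hlam : 0 < lam) {f : ℝ → ℝ}
    (hf : Measurable f) {z : ℝ} (hz : maxOp t f z ≤ ENNReal.ofReal lam) (k : ℤ) :
    IntegrableOn f (dyadicPiece k z) ∧ ∫ y in dyadicPiece k z, |f y| ≤ lam * 2 ^ k := by
  have ht0 : 0 < t := by linarith
  have h1 := (le_iSup (fun k : ℤ => ((ENNReal.ofReal ((2 : ℝ) ^ k))⁻¹ *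
    ∫⁻ y in dyadicPiece k z, ENNReal.ofReal (|f y| ^ t)) ^ (1 / t)) k).trans hz
  set Λ := ENNReal.ofReal lam with hΛ
  set ℓ := ENNReal.ofReal ((2 : ℝ) ^ k) with hℓ
  have hℓ0 : ℓ ≠ 0 := by
    rw [hℓ, Ne, ENNReal.ofReal_eq_zero, not_le]; positivity
  have hℓt : ℓ ≠ ∞ := ENNReal.ofReal_ne_top
  set J := ∫⁻ y in dyadicPiece k z, ENNReal.ofReal (|f y| ^ t) with hJ
  have h2 : J ≤ ℓ * Λ ^ t := by
    have := ENNReal.rpow_le_rpow h1 ht0.le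
    rw [← ENNReal.rpow_mul, one_div_mul_cancel ht0.ne', ENNReal.rpow_one] at this
    rwa [ENNReal.inv_mul_le_iff hℓ0 hℓt] at this
  have hpq : t.HolderConjugate t.conjExponent := Real.HolderConjugate.conjExponent ht
  have hm : Measurable fun y => ENNReal.ofReal |f y| := hf.abs.ennreal_ofReal
  have h3 := ENNReal.lintegral_mul_le_Lp_mul_Lq (volume.restrict (dyadicPiece k z)) hpq
    hm.aemeasurable (g := fun _ => 1) aemeasurable_const
  have hJ' : ∫⁻ y in dyadicPiece k z, ENNReal.ofReal |f y| ^ t = J := by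
    refine lintegral_congr fun y => ?_
    rw [ENNReal.ofReal_rpow_of_nonneg (abs_nonneg _) ht0.le]
  have h4 : ∫⁻ y in dyadicPiece k z, ENNReal.ofReal |f y| ≤ Λ * ℓ := by
    calc ∫⁻ y in dyadicPiece k z, ENNReal.ofReal |f y|
        ≤ J ^ (1 / t) * ℓ ^ (1 / t.conjExponent) := by
          simpa [hJ', volume_dyadicPiece] using h3
      _ ≤ (ℓ * Λ ^ t) ^ (1 / t) * ℓ ^ (1 / t.conjExponent) := by
          gcongr
      _ = Λ * ℓ := by
          rw [ENNReal.mul_rpow_of_nonneg _ _ (by positivity), ← ENNReal.rpow_mul,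
            mul_one_div_cancel ht0.ne', ENNReal.rpow_one, mul_right_comm,
            ← ENNReal.rpow_add _ _ hℓ0 hℓt]
          have : 1 / t + 1 / t.conjExponent = 1 := by
            simpa [one_div] using hpq.inv_add_inv_eq_one
          rw [this, ENNReal.rpow_one, mul_comm]
  have hfin : ∫⁻ y in dyadicPiece k z, ENNReal.ofReal |f y| < ∞ :=
    h4.trans_lt (ENNReal.mul_lt_top ENNReal.ofReal_lt_top ENNReal.ofReal_lt_top)
  constructor
  · refine ⟨hf.aestronglyMeasurable, ?_⟩
    rw [hasFiniteIntegral_iff_norm]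
    exact hfin
  · rw [integral_eq_lintegral_of_nonneg_ae (Filter.Eventually.of_forall fun y => abs_nonneg _)
      hf.abs.aestronglyMeasurable]
    refine ENNReal.toReal_le_of_le_ofReal (by positivity) (h4.trans (le_of_eq ?_))
    rw [hΛ, hℓ, ← ENNReal.ofReal_mul hlam.le]

/-! ### The estimate for a single tree -/

lemma quartile_eq_of_mem {P Q : Quartile} {x ξ : ℝ} (hk : P.I.k = Q.I.k) (hxP : x ∈ P.I.toSet)
    (hxQ : x ∈ Q.I.toSet) (hP : ξ ∈ P.ω.toSet) (hQ : ξ ∈ Q.ω.toSet) : P = Q := by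
  have hω : P.ω.k = Q.ω.k := by
    have h1 := P.area
    have h2 := Q.area
    omega
  rw [mem_toSet] at hxP hxQ hP hQ
  rw [hk, hxQ] at hxP
  rw [hω, hQ] at hP
  obtain ⟨⟨n, k⟩, ⟨m, l⟩, h⟩ := P
  obtain ⟨⟨n', k'⟩, ⟨m', l'⟩, h'⟩ := Q
  simp only at hk hω hxP hP
  have e1 : n' = n := by exact_mod_cast hxP
  have e2 : m' = m := by exact_mod_cast hP
  subst hk hω e1 e2
  rfl

/-- The constant in the tree estimate before taking the square root. -/
noncomputable def treeConst (r : ℝ) : ℝ :=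
  16 * (1 + varConst r ^ (2 / r)) * (4 + ∑' m : ℕ, ((1 / 2 : ℝ) ^ (r - 2)) ^ m)

lemma varConst_pos (r : ℝ) : 0 < varConst r := by
  rw [varConst]; positivity

lemma treeConst_pos (r : ℝ) : 0 < treeConst r := by
  have h1 : 0 ≤ ∑' m : ℕ, ((1 / 2 : ℝ) ^ (r - 2)) ^ m := tsum_nonneg fun m => by positivity
  have h2 := Real.rpow_pos_of_pos (varConst_pos r) (2 / r)
  rw [treeConst]
  positivity

/-- The coefficient attached to the scale `K` in the definition of the modified wave packets. -/
noncomputable def scaleCoeff {r : ℝ} (L : LinData r) (i : Fin 4) (K : ℤ) (x : ℝ) : ℝ :=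
  if i = (2 : Fin 4) then linCoeff (L.kseq x) (L.aseq x) K else 1

lemma wp_eq_scaleCoeff {r : ℝ} (L : LinData r) (P : Quartile) (i : Fin 4) (x : ℝ) :
    L.wp P i x = scaleCoeff L i P.I.k x * P.wp i x := rfl

lemma sq_sum_scaleCoeff_le {r : ℝ} (hr : 2 < r) (L : LinData r) (i : Fin 4) (K : ℤ) (x : ℝ)
    (δ : ℕ → ℝ) (N : ℕ) :
    (∑ n ∈ Finset.range N, scaleCoeff L i (K - n) x * δ n) ^ 2 ≤
      (1 + varConst r ^ (2 / r)) * varPot ((1 / 2 : ℝ) ^ (r - 2)) δ N := by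
  have h2 := Real.rpow_pos_of_pos (varConst_pos r) (2 / r)
  have h3 := sq_sum_le_varPot (by positivity : (0 : ℝ) ≤ (1 / 2 : ℝ) ^ (r - 2)) δ N
  have h4 : 0 ≤ varPot ((1 / 2 : ℝ) ^ (r - 2)) δ N := (sq_nonneg _).trans h3
  by_cases hi : i = 2
  · simp only [scaleCoeff, if_pos hi]
    have := sq_sum_linCoeff_le hr (L.mono x) (L.aseq x) (L.abound x) K δ N
    linarith
  · simp only [scaleCoeff, if_neg hi, one_mul]
    nlinarith

/-- The tree estimate. With `c_P = ⟨f, φ̃_{P_i}⟩`, one has `∑ c_P² = ∫ f ∑ c_P φ̃_{P_i}`, and after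
modulation the sum `∑ c_P φ_{P_i}` is a dyadic martingale whose square function has integral
`∑ c_P²`. -/
lemma tree_bound {r t lam : ℝ} (hr : 2 < r) (ht : 1 < t) (hlam : 0 < lam) (L : LinData r)
    {f : ℝ → ℝ} (hf : Measurable f) {i j : Fin 4} (hij : j ≠ i) {T : Finset Quartile} {ξ : ℝ}
    {It : DyadicInterval} (hT : IsOverlapping j T ξ It)
    (hmax : ∀ P ∈ T, ¬ P.I.toSet ⊆ {x : ℝ | ENNReal.ofReal lam < maxOp t f x}) :
    ∑ P ∈ T, innerF f (L.wp P i) ^ 2 ≤ treeConst r * lam ^ 2 * It.len := by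
  have hlen : 0 < It.len := by rw [DyadicInterval.len]; positivity
  rcases T.eq_empty_or_nonempty with rfl | hne
  · have := treeConst_pos r
    simp only [Finset.sum_empty]
    positivity
  set k₀ := It.k with hk₀
  set x₀ := It.lo with hx₀
  have hIt : It.toSet = dyadicPiece k₀ x₀ := toSet_eq_dyadicPiece (lo_mem_toSet It)
  set s := lacShift i j with hs
  have hs1 : s ≤ 1 := lacShift_le i j
  set w : ℝ → ℝ := toneSign k₀ ⌊ξ * 2 ^ k₀⌋₊ with hw
  have hww : ∀ x, w x * w x = 1 := fun x => toneSign_mul_self _ _ x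
  set c : Quartile → ℝ := fun P => innerF f (L.wp P i) with hc
  let nP : Quartile → ℕ := fun P => (k₀ + s - P.I.k).toNat
  have hsub : ∀ P ∈ T, P.I.toSet ⊆ dyadicPiece k₀ x₀ := fun P hP => hIt ▸ (hT.1.2 P hP).1
  have hPk : ∀ P ∈ T, P.I.k ≤ k₀ := fun P hP => k_le_of_subset (hsub P hP)
  have hnP : ∀ P ∈ T, P.I.k = k₀ + s - nP P := by
    intro P hP
    have := hPk P hP
    simp only [nP]
    omega
  -- a point of `I_P` at which the maximal function is at most `lam`
  have hpt : ∀ P ∈ T, ∃ z ∈ P.I.toSet, maxOp t f z ≤ ENNReal.ofReal lam := by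
    intro P hP
    obtain ⟨z, hz, hz'⟩ := Set.not_subset.1 (hmax P hP)
    exact ⟨z, hz, not_lt.1 hz'⟩
  let N : ℕ := T.sup nP + 1
  have hN : ∀ P ∈ T, nP P < N := fun P hP => Nat.lt_succ_of_le (Finset.le_sup hP)
  let D : ℝ → ℕ → ℝ := fun x n => ∑ P ∈ T with nP P = n, c P * (w x * P.wp i x)
  let G : ℝ → ℝ := fun x => ∑ P ∈ T, c P * (f x * L.wp P i x)
  have hflip : ∀ x y (n : ℕ), y ∈ dyadicPiece (k₀ - n) x →
      D y n * cellSign (k₀ - n - 1) y = D x n * cellSign (k₀ - n - 1) x := by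
    intro x y n hy
    simp only [D, Finset.sum_mul]
    refine Finset.sum_congr rfl fun P hP => ?_
    obtain ⟨hP, hPn⟩ := Finset.mem_filter.1 hP
    have e : k₀ - n = P.I.k - s := by
      have := hnP P hP
      omega
    have h := modulated_wp_flip hij (hPk P hP) (hT.2 P hP) (x := x) (y := y)
      (by rw [← hs, ← e]; exact mem_dyadicPiece.1 hy)
    rw [← hs, ← e] at h
    linear_combination c P * h
  have hcont : dyadicPiece k₀ x₀ ⊆ Set.Ici 0 := by
    rw [← hIt]
    intro x hx
    have h0 : 0 ≤ It.lo := by rw [DyadicInterval.lo]; positivity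
    exact h0.trans hx.1
  have hterm : ∀ P ∈ T, IntegrableOn (fun x => c P * (f x * L.wp P i x)) (Set.Ici 0) := by
    intro P _
    by_cases h0 : c P = 0
    · simp [h0]
    · refine Integrable.const_mul ?_ _
      by_contra hni
      exact h0 (integral_undef hni)
  have hG : IntegrableOn G (Set.Ici 0) := integrable_finsetSum _ hterm
  -- disjointness of the quartiles of a given scale
  have hDsq : ∀ x n, D x n ^ 2 =
      ∑ P ∈ T with nP P = n, c P ^ 2 * P.I.toSet.indicator (fun _ => (P.I.len)⁻¹) x := by
    intro x n
    have hterm2 : ∀ P : Quartile, (c P * (w x * P.wp i x)) ^ 2 =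
        c P ^ 2 * P.I.toSet.indicator (fun _ => (P.I.len)⁻¹) x := by
      intro P
      rw [← wp_sq P i x]
      linear_combination c P ^ 2 * P.wp i x ^ 2 * hww x
    by_cases hex : ∃ P ∈ T.filter (nP · = n), x ∈ P.I.toSet
    · obtain ⟨P, hP, hxP⟩ := hex
      have hz : ∀ Q ∈ T.filter (nP · = n), Q ≠ P → x ∉ Q.I.toSet := by
        intro Q hQ hQP hxQ
        rw [Finset.mem_filter] at hP hQ
        refine hQP (quartile_eq_of_mem ?_ hxQ hxP (hT.1.2 Q hQ.1).2 (hT.1.2 P hP.1).2)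
        rw [hnP Q hQ.1, hnP P hP.1, hQ.2, hP.2]
      simp only [D]
      rw [Finset.sum_eq_single_of_mem P hP, Finset.sum_eq_single_of_mem P hP, hterm2]
      · intro Q hQ hQP
        rw [Set.indicator_of_notMem (hz Q hQ hQP), mul_zero]
      · intro Q hQ hQP
        rw [wp_eq_zero i (hz Q hQ hQP), mul_zero, mul_zero]
    · push Not at hex
      simp only [D]
      rw [Finset.sum_eq_zero, Finset.sum_eq_zero]
      · norm_num
      · intro Q hQ
        rw [Set.indicator_of_notMem (hex Q hQ), mul_zero]
      · intro Q hQ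
        rw [wp_eq_zero i (hex Q hQ), mul_zero, mul_zero]
  have hmeasI : ∀ P : Quartile, MeasurableSet P.I.toSet := fun P => measurableSet_Ico
  have hindI : ∀ P : Quartile, IntegrableOn
      (fun x => c P ^ 2 * P.I.toSet.indicator (fun _ => (P.I.len)⁻¹) x) (dyadicPiece k₀ x₀) := by
    intro P
    refine Integrable.const_mul ((integrable_indicator_iff (hmeasI P)).2 ?_) _
    refine integrableOn_const (((Measure.restrict_le_self _).trans_lt ?_).ne) (by simp)
    rw [DyadicInterval.toSet, Real.volume_Ico]
    exact ENNReal.ofReal_lt_top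
  have hD : ∀ n, IntegrableOn (fun x => D x n ^ 2) (dyadicPiece k₀ x₀) := by
    intro n
    simp only [hDsq]
    exact integrable_finsetSum _ fun P _ => hindI P
  have hsqint : ∫ z in dyadicPiece k₀ x₀, ∑ n ∈ Finset.range N, D z n ^ 2 = ∑ P ∈ T, c P ^ 2 := by
    have e : ∀ z, ∑ n ∈ Finset.range N, D z n ^ 2 =
        ∑ P ∈ T, c P ^ 2 * P.I.toSet.indicator (fun _ => (P.I.len)⁻¹) z := by
      intro z
      simp only [hDsq]
      exact Finset.sum_fiberwise_of_maps_to (fun P hP => Finset.mem_range.2 (hN P hP)) _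
    simp only [e]
    rw [integral_finsetSum _ fun P _ => hindI P]
    refine Finset.sum_congr rfl fun P hP => ?_
    have hl : 0 < P.I.len := by rw [DyadicInterval.len]; positivity
    rw [integral_const_mul, setIntegral_indicator (hmeasI P),
      Set.inter_eq_self_of_subset_right (hsub P hP), setIntegral_const,
      toSet_eq_dyadicPiece (lo_mem_toSet P.I), volume_real_dyadicPiece, smul_eq_mul,
      DyadicInterval.len, mul_inv_cancel₀ (by positivity), mul_one]
  have hGint : ∑ P ∈ T, c P ^ 2 = ∫ z in dyadicPiece k₀ x₀, G z := by
    have e1 : ∫ z in dyadicPiece k₀ x₀, G z = ∫ z in Set.Ici 0, G z := by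
      refine (setIntegral_eq_of_subset_of_forall_sdiff_eq_zero measurableSet_Ici hcont ?_).symm
      intro x hx
      refine Finset.sum_eq_zero fun P hP => ?_
      rw [wp_eq_scaleCoeff, wp_eq_zero i (fun h => hx.2 (hsub P hP h))]
      ring
    rw [e1, integral_finsetSum _ hterm]
    refine Finset.sum_congr rfl fun P _ => ?_
    rw [integral_const_mul, pow_two]
    rfl
  -- the modulated expansion of `G`, sorted by scale
  have hGexp : ∀ y (M : ℕ), N ≤ M → G y =
      f y * w y * ∑ n ∈ Finset.range M, scaleCoeff L i (k₀ + s - n) y * D y n := by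
    intro y M hM
    have e : ∀ n ∈ Finset.range M, scaleCoeff L i (k₀ + s - n) y * D y n =
        ∑ P ∈ T with nP P = n, c P * (w y * L.wp P i y) := by
      intro n _
      simp only [D, Finset.mul_sum]
      refine Finset.sum_congr rfl fun P hP => ?_
      obtain ⟨hP, hPn⟩ := Finset.mem_filter.1 hP
      rw [wp_eq_scaleCoeff, hnP P hP, hPn]
      ring
    rw [Finset.sum_congr rfl e, Finset.sum_fiberwise_of_maps_to
      (fun P hP => Finset.mem_range.2 ((hN P hP).trans_le hM)), Finset.mul_sum]
    refine Finset.sum_congr rfl fun P _ => ?_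
    linear_combination (-(c P * f y * L.wp P i y)) * hww y
  have htopP : IntegrableOn f (dyadicPiece k₀ x₀) ∧
      ∫ z in dyadicPiece k₀ x₀, |f z| ≤ lam * 2 ^ k₀ := by
    obtain ⟨P, hP⟩ := hne
    obtain ⟨z, hz, hzl⟩ := hpt P hP
    have := integral_le_of_maxOp_le ht hlam hf hzl k₀
    rwa [dyadicPiece_eq (mem_dyadicPiece.1 (hsub P hP hz))] at this
  have hpow : 0 < (2 : ℝ) ^ k₀ := by positivity
  have halt : ∀ x ∈ dyadicPiece k₀ x₀, ∀ n : ℕ,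
      (∀ y ∈ dyadicPiece (k₀ - n) x, |G y| ≤ |f y| *
        √((1 + varConst r ^ (2 / r)) * varPot ((1 / 2 : ℝ) ^ (r - 2)) (D x) n)) ∨
      (n < N ∧ ∀ y ∈ dyadicPiece (k₀ - n) x,
        ∫ z in dyadicPiece (k₀ - n - 1) y, |f z| ≤ 4 * lam * 2 ^ (k₀ - n - 1)) := by
    intro x _ n
    by_cases hex : ∃ P ∈ T, P.I.toSet ⊆ dyadicPiece (k₀ - n + s) x
    · right
      obtain ⟨P, hP, hPx⟩ := hex
      have h1 := k_le_of_subset hPx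
      have h2 := hnP P hP
      refine ⟨lt_of_le_of_lt (by omega) (hN P hP), fun y hy => ?_⟩
      obtain ⟨z, hz, hzl⟩ := hpt P hP
      have h3 := integral_le_of_maxOp_le ht hlam hf hzl (k₀ - n + s)
      rw [dyadicPiece_eq (mem_dyadicPiece.1 (hPx hz))] at h3
      have hyx : y ∈ dyadicPiece (k₀ - n + s) x :=
        dyadicPiece_subset (by omega) (self_mem_dyadicPiece _ x) hy
      have h4 : dyadicPiece (k₀ - n - 1) y ⊆ dyadicPiece (k₀ - n + s) x :=
        dyadicPiece_subset (by omega) hyx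
      refine (setIntegral_mono_set h3.1.abs (Filter.Eventually.of_forall fun _ => abs_nonneg _)
        h4.eventuallyLE).trans (h3.2.trans ?_)
      have h5 : (2 : ℝ) ^ (k₀ - n + s) ≤ 2 ^ (k₀ - n - 1 + 2) :=
        zpow_le_zpow_right₀ (by norm_num) (by omega)
      rw [zpow_add₀ (by norm_num : (2 : ℝ) ≠ 0) (k₀ - n - 1) 2] at h5
      norm_num at h5
      nlinarith
    · left
      push Not at hex
      intro y hy
      have hDz : ∀ m, n ≤ m → D y m = 0 := by
        intro m hm
        refine Finset.sum_eq_zero fun P hP => ?_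
        obtain ⟨hP, hPm⟩ := Finset.mem_filter.1 hP
        rw [wp_eq_zero i, mul_zero, mul_zero]
        intro hyP
        refine hex P hP ?_
        have h2 := hnP P hP
        rw [toSet_eq_dyadicPiece hyP]
        exact dyadicPiece_subset (by omega)
          (dyadicPiece_subset (by omega) (self_mem_dyadicPiece _ x) hy)
      have hsum : ∑ m ∈ Finset.range (max n N), scaleCoeff L i (k₀ + s - m) y * D y m =
          ∑ m ∈ Finset.range n, scaleCoeff L i (k₀ + s - m) y * D x m := by
        rw [← Finset.sum_subset (Finset.range_mono (le_max_left n N))]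
        · refine Finset.sum_congr rfl fun m hm => ?_
          rw [increments_eq hflip hy m (Finset.mem_range.1 hm)]
        · intro m _ hm
          rw [hDz m (not_lt.1 fun h => hm (Finset.mem_range.2 h)), mul_zero]
      rw [hGexp y (max n N) (le_max_right _ _), hsum, abs_mul, abs_mul]
      have hw1 : |w y| = 1 := by
        have := congrArg (fun u : ℝ => |u|) (hww y)
        simp only [abs_mul, abs_one] at this
        nlinarith [abs_nonneg (w y)]
      rw [hw1, mul_one]
      exact mul_le_mul_of_nonneg_left
        (Real.abs_le_sqrt (sq_sum_scaleCoeff_le hr L i (k₀ + s) y (D x) n)) (abs_nonneg _)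
  have hρ1 : (1 / 2 : ℝ) ^ (r - 2) < 1 :=
    Real.rpow_lt_one (by norm_num) (by norm_num) (by linarith)
  have hC₀ : 0 ≤ 1 + varConst r ^ (2 / r) := by
    have := Real.rpow_pos_of_pos (varConst_pos r) (2 / r)
    linarith
  have hmain := integral_le_of_martingale (lam := lam) (by positivity) hρ1 hC₀ k₀ x₀ D N f G
    hflip htopP.1 (hG.mono_set hcont) hD halt (htopP.2.trans (by nlinarith))
  rw [hsqint] at hmain
  have habs : ∫ z in dyadicPiece k₀ x₀, G z ≤ ∫ z in dyadicPiece k₀ x₀, |G z| :=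
    integral_mono (hG.mono_set hcont) (hG.mono_set hcont).abs fun z => le_abs_self _
  have hfin : ∑ P ∈ T, c P ^ 2 ≤ treeConst r * lam ^ 2 * 2 ^ k₀ := by
    rw [treeConst]
    linarith
  exact hfin

/-- **Proposition 4.1 (variation-norm size bound).** For `r > 2`, `1 < t < ∞` there is
`C_{r,t}` such that, for any linearization data, any `λ > 0`, and any collection of
quartiles `Ps` with `I_P ⊄ {M^t f > λ}` for every `P ∈ Ps`, one has
`size_i(Ps, f) ≤ C_{r,t} λ` for each `i`. -/
theorem variation_norm_size_bound (r t : ℝ) (hr : 2 < r) (ht : 1 < t) :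
    ∃ C : ℝ, 0 < C ∧ ∀ (L : LinData r) (lam : ℝ), 0 < lam →
      ∀ (Ps : Set Quartile) (f : ℝ → ℝ), Measurable f →
      (∀ P ∈ Ps, ¬ P.I.toSet ⊆ {x : ℝ | ENNReal.ofReal lam < maxOp t f x}) →
      ∀ i : Fin 4, treeSize L i Ps f ≤ ENNReal.ofReal (C * lam) := by
  have hpos := treeConst_pos r
  refine ⟨√(treeConst r), Real.sqrt_pos.2 hpos, ?_⟩
  intro L lam hlam Ps f hf hmax i
  refine iSup_le fun T => iSup_le fun ξ => iSup_le fun It => iSup_le fun hlac =>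
    iSup_le fun hsub => ?_
  obtain ⟨j, hij, hT⟩ := hlac
  have hb := tree_bound hr ht hlam L hf hij hT fun P hP => hmax P (hsub hP)
  have hlen : 0 < It.len := by rw [DyadicInterval.len]; positivity
  have hle : (It.len)⁻¹ * ∑ P ∈ T, innerF f (L.wp P i) ^ 2 ≤ (√(treeConst r) * lam) ^ 2 := by
    rw [mul_pow, Real.sq_sqrt hpos.le, inv_mul_le_iff₀ hlen]
    linarith
  rw [ENNReal.ofReal_rpow_of_nonneg (mul_nonneg (by positivity)
    (Finset.sum_nonneg fun P _ => sq_nonneg _)) (by norm_num), ← Real.sqrt_eq_rpow]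
  exact ENNReal.ofReal_le_ofReal (Real.sqrt_le_iff.2 ⟨by positivity, hle⟩)
end

section
/- (Linearization of the variation norm.) Let r > 2 with conjugate exponent r' = r/(r−1), let 𝐏̄ be a finite collection of quartiles, let f_1, f_2 be real-valued integrable functions on [0,∞), and let x ∈ [0,∞). Then there exist a strictly increasing sequence of integers (k_j)_{j∈ℤ} and a real sequence (a_j)_{j∈ℤ} with ∑_{j∈ℤ} |a_j|^{r'} ≤ 1 such that, setting a_P = a_m when m is the unique integer with 2^{k_{m−1}} ≤ |I_P| < 2^{k_m} and a_P = 0 when no such m exists, one has ∑_{P ∈ 𝐏̄} |I_P|^{-1/2} ⟨f_1, φ_{P_1}⟩ ⟨f_2, φ_{P_2}⟩ φ_{P_3}(x) a_P ≥ (1/2) ‖ ∑_{P ∈ 𝐏̄ : |I_P| ≥ 2^k} |I_P|^{-1/2} ⟨f_1, φ_{P_1}⟩ ⟨f_2, φ_{P_2}⟩ φ_{P_3}(x) ‖_{V^r_k}. -/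
/-! The variation norm is a supremum over finite increasing sequences, and each of its terms is
an `ℓ^r` norm of the increments of the truncated sums. The increment between two consecutive
scales `k_j < k_{j+1}` is, up to sign, the sum of the terms with `k_j ≤ log₂|I_P| < k_{j+1}`.
By `ℓ^r`–`ℓ^{r'}` duality (`exists_dual_coeff`) each such `ℓ^r` norm equals a linearized sum for
suitable coefficients of `ℓ^{r'}` norm at most one (`exists_linearization`). All linearized sums
are bounded by the sum of the absolute values of the terms, so the supremum is finite; unless it
is zero, some finite sequence attains more than half of it, and its linearization is the one
required. -/

open MeasureTheory Set
open scoped ENNReal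

/-- The extremal sequence in `ℓ^r`–`ℓ^{r'}` duality for finitely many reals. -/
lemma exists_dual_coeff (r : ℝ) (hr : 1 < r) (N : ℕ) (e : ℕ → ℝ) :
    ∃ α : ℕ → ℝ, ∑ j ∈ Finset.range N, |α j| ^ (r / (r - 1)) ≤ 1 ∧
      ∑ j ∈ Finset.range N, e j * α j = (∑ j ∈ Finset.range N, |e j| ^ r) ^ (1 / r) := by
  have hpq : r.HolderConjugate (r / (r - 1)) := by
    simpa [Real.conjExponent] using Real.HolderConjugate.conjExponent hr
  obtain ⟨g, hg, hge⟩ :=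
    (NNReal.isGreatest_Lp (Finset.range N) (fun j => ‖e j‖₊) hpq).1
  simp only [Set.mem_ofPred_eq] at hg
  have hs : ∀ j, |SignType.sign (e j) * (g j : ℝ)| ≤ g j := by
    intro j
    rcases lt_trichotomy (e j) 0 with h | h | h <;> simp [h]
  refine ⟨fun j => SignType.sign (e j) * (g j : ℝ), ?_, ?_⟩
  · calc _ ≤ ∑ j ∈ Finset.range N, (g j : ℝ) ^ (r / (r - 1)) := by
          refine Finset.sum_le_sum fun j _ => ?_
          exact Real.rpow_le_rpow (abs_nonneg _) (hs j) hpq.symm.nonneg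
      _ ≤ 1 := by exact_mod_cast hg
  · have h := congrArg (fun t : NNReal => (t : ℝ)) hge
    simp only [NNReal.coe_sum, NNReal.coe_mul, NNReal.coe_rpow, coe_nnnorm,
      Real.norm_eq_abs] at h
    rw [← h]
    refine Finset.sum_congr rfl fun j _ => ?_
    rw [← mul_assoc, mul_comm (e j), sign_mul_self]

/-- The value of `linCoeff` on the block of index `m`. -/
lemma linCoeff_of_mem {kk : ℤ → ℤ} (hk : StrictMono kk) (a : ℤ → ℝ) {K m : ℤ}
    (h₁ : kk (m - 1) ≤ K) (h₂ : K < kk m) : linCoeff kk a K = a m := by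
  have h : ∃ m : ℤ, kk (m - 1) ≤ K ∧ K < kk m := ⟨m, h₁, h₂⟩
  obtain ⟨h₃, h₄⟩ := h.choose_spec
  have e : h.choose = m := by
    have l₁ := hk.lt_iff_lt.1 (h₃.trans_lt h₂)
    have l₂ := hk.lt_iff_lt.1 (h₁.trans_lt h₄)
    omega
  rw [linCoeff, dif_pos h, e]

/-- A finite increasing sequence together with coefficients on its gaps is extended to the
two-sided data of `linCoeff`, with vanishing coefficients outside of the gaps. -/
lemma exists_extension (N : ℕ) (k : ℕ → ℤ) (hk : StrictMono k) (α : ℕ → ℝ) (q : ℝ)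
    (hq : 0 < q) (hα : ∑ j ∈ Finset.range N, |α j| ^ q ≤ 1) :
    ∃ (kk : ℤ → ℤ) (a : ℤ → ℝ), StrictMono kk ∧
      (∀ s : Finset ℤ, ∑ j ∈ s, |a j| ^ q ≤ 1) ∧
      ∀ K, linCoeff kk a K =
        ∑ j ∈ Finset.range N, if k j ≤ K ∧ K < k (j + 1) then α j else 0 := by
  let kk : ℤ → ℤ := fun j => if 0 ≤ j then k j.toNat else k 0 + j
  let a : ℤ → ℝ := fun j => if 1 ≤ j ∧ j ≤ N then α (j - 1).toNat else 0
  have hkk : StrictMono kk := by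
    intro i j hij
    simp only [kk]
    split_ifs with h₁ h₂ h₂
    · exact hk (by omega)
    · omega
    · have := hk.monotone (Nat.zero_le j.toNat)
      omega
    · omega
  refine ⟨kk, a, hkk, ?_, ?_⟩
  · intro s
    let T : Finset ℤ := (Finset.range N).image fun j : ℕ => (j : ℤ) + 1
    have hz : ∀ j, j ∉ T → |a j| ^ q = 0 := by
      intro j hj
      have : ¬ (1 ≤ j ∧ j ≤ N) := by
        intro h
        exact hj (Finset.mem_image.2 ⟨(j - 1).toNat, by simp; omega, by omega⟩)
      simp [a, this, Real.zero_rpow hq.ne']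
    calc ∑ j ∈ s, |a j| ^ q ≤ ∑ j ∈ s ∪ T, |a j| ^ q :=
          Finset.sum_le_sum_of_subset_of_nonneg Finset.subset_union_left
            fun _ _ _ => by positivity
      _ = ∑ j ∈ T, |a j| ^ q :=
          (Finset.sum_subset Finset.subset_union_right fun j _ hj => hz j hj).symm
      _ = ∑ j ∈ Finset.range N, |α j| ^ q := by
          rw [Finset.sum_image (fun i _ j _ h => by simpa using h)]
          refine Finset.sum_congr rfl fun j hj => ?_
          have hj' := Finset.mem_range.1 hj
          have : (1 : ℤ) ≤ (j : ℤ) + 1 ∧ (j : ℤ) + 1 ≤ N := by omega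
          simp [a, this]
      _ ≤ 1 := hα
  · intro K
    by_cases hK : ∃ j < N, k j ≤ K ∧ K < k (j + 1)
    · obtain ⟨j, hj, h₁, h₂⟩ := hK
      have e₁ : kk ((j : ℤ) + 1 - 1) = k j := by simp [kk]
      have e₂ : kk ((j : ℤ) + 1) = k (j + 1) := by
        have : (0 : ℤ) ≤ (j : ℤ) + 1 := by omega
        have e : ((j : ℤ) + 1).toNat = j + 1 := by omega
        simp [kk, this, e]
      rw [linCoeff_of_mem hkk a (m := (j : ℤ) + 1) (by rwa [e₁]) (by rwa [e₂]),
        Finset.sum_eq_single_of_mem j (Finset.mem_range.2 hj)]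
      · have : (1 : ℤ) ≤ (j : ℤ) + 1 ∧ (j : ℤ) + 1 ≤ N := by omega
        simp [a, this, h₁, h₂]
      · intro i _ hij
        refine if_neg fun ⟨h₃, h₄⟩ => hij ?_
        have l₁ := hk.lt_iff_lt.1 (h₁.trans_lt h₄)
        have l₂ := hk.lt_iff_lt.1 (h₃.trans_lt h₂)
        omega
    · rw [Finset.sum_eq_zero fun j hj => if_neg fun h => hK ⟨j, Finset.mem_range.1 hj, h⟩]
      by_cases hm : ∃ m : ℤ, kk (m - 1) ≤ K ∧ K < kk m
      · obtain ⟨m, h₁, h₂⟩ := hm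
        rw [linCoeff_of_mem hkk a h₁ h₂]
        refine if_neg fun hmN => hK ⟨(m - 1).toNat, by omega, ?_, ?_⟩
        · have : (0 : ℤ) ≤ m - 1 := by omega
          simp only [kk, if_pos this] at h₁
          exact h₁
        · have : (0 : ℤ) ≤ m := by omega
          have e : (m - 1).toNat + 1 = m.toNat := by omega
          rw [e]
          simpa [kk, this] using h₂
      · rw [linCoeff, dif_neg hm]

/-- Each term of the variation norm of a truncated sum is a linearized sum, which in turn is
bounded by the sum of the absolute values. -/
lemma exists_linearization {ι : Type*} (r : ℝ) (hr : 1 < r) (s : Finset ι) (c : ι → ℝ)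
    (κ : ι → ℤ) (N : ℕ) (k : ℕ → ℤ) (hk : StrictMono k) (g : ℤ → ℝ)
    (hg : ∀ m, g m = ∑ i ∈ s.filter (fun i => m ≤ κ i), c i) :
    ∃ (kk : ℤ → ℤ) (a : ℤ → ℝ), StrictMono kk ∧
      (∀ t : Finset ℤ, ∑ j ∈ t, |a j| ^ (r / (r - 1)) ≤ 1) ∧
      (∑ j ∈ Finset.range N, ENNReal.ofReal (|g (k (j + 1)) - g (k j)| ^ r)) ^ (1 / r)
        = ENNReal.ofReal (∑ i ∈ s, c i * linCoeff kk a (κ i)) ∧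
      ∑ i ∈ s, c i * linCoeff kk a (κ i) ≤ ∑ i ∈ s, |c i| := by
  obtain ⟨α, hα, hαe⟩ := exists_dual_coeff r hr N fun j => g (k j) - g (k (j + 1))
  have hq : 0 < r / (r - 1) := div_pos (by linarith) (by linarith)
  obtain ⟨kk, a, hkk, ha, hlin⟩ := exists_extension N k hk α _ hq hα
  refine ⟨kk, a, hkk, ha, ?_, ?_⟩
  · have hdiff : ∀ j, g (k j) - g (k (j + 1)) =
        ∑ i ∈ s, if k j ≤ κ i ∧ κ i < k (j + 1) then c i else 0 := by
      intro j
      rw [hg, hg, Finset.sum_filter, Finset.sum_filter, ← Finset.sum_sub_distrib]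
      refine Finset.sum_congr rfl fun i _ => ?_
      have := hk (Nat.lt_succ_self j)
      simp only [Nat.succ_eq_add_one] at this
      split_ifs <;> first | omega | simp
    have hsum : ∑ i ∈ s, c i * linCoeff kk a (κ i) =
        ∑ j ∈ Finset.range N, (g (k j) - g (k (j + 1))) * α j := by
      simp only [hlin, hdiff, Finset.mul_sum, Finset.sum_mul]
      rw [Finset.sum_comm]
      refine Finset.sum_congr rfl fun j _ => Finset.sum_congr rfl fun i _ => ?_
      split_ifs <;> simp
    rw [hsum, hαe, ← ENNReal.ofReal_sum_of_nonneg fun _ _ => by positivity,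
      ENNReal.ofReal_rpow_of_nonneg (Finset.sum_nonneg fun _ _ => by positivity)
        (by positivity)]
    simp only [abs_sub_comm]
  · have ha1 : ∀ j, |a j| ≤ 1 := by
      intro j
      have h := ha {j}
      rw [Finset.sum_singleton] at h
      by_contra! hlt
      exact absurd h (not_le.2 (Real.one_lt_rpow hlt hq))
    have hl1 : ∀ K, |linCoeff kk a K| ≤ 1 := by
      intro K
      rw [linCoeff]
      split_ifs
      · exact ha1 _
      · simp
    refine Finset.sum_le_sum fun i _ => (le_abs_self _).trans ?_
    rw [abs_mul]
    exact mul_le_of_le_one_right (abs_nonneg _) (hl1 _)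

/-- **Equation (2.2) (linearization of the variation norm).** For `r > 2` with conjugate
exponent `r' = r/(r-1)`, a finite collection of quartiles, integrable `f₁, f₂`, and
`x ∈ [0,∞)`, there are a strictly increasing `(k_j)_{j∈ℤ}` and `(a_j)_{j∈ℤ}` with
`∑_j |a_j|^{r'} ≤ 1` such that, with `a_P` as in the context,
`∑_P |I_P|^{-1/2} ⟨f₁,φ_{P_1}⟩⟨f₂,φ_{P_2}⟩ φ_{P_3}(x) a_P
  ≥ (1/2) ‖∑_{|I_P| ≥ 2^k} |I_P|^{-1/2} ⟨f₁,φ_{P_1}⟩⟨f₂,φ_{P_2}⟩ φ_{P_3}(x)‖_{V^r_k}`. -/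
theorem linearization_of_variation (r : ℝ) (hr : 2 < r) (Ps : Finset Quartile)
    (f1 f2 : ℝ → ℝ) (h1 : Integrable f1 mu0) (h2 : Integrable f2 mu0)
    (x : ℝ) (hx : 0 ≤ x) :
    ∃ (k : ℤ → ℤ) (a : ℤ → ℝ), StrictMono k ∧
      (∀ s : Finset ℤ, ∑ j ∈ s, |a j| ^ (r / (r - 1)) ≤ 1) ∧
      varNorm r Set.univ (fun m =>
          ∑ P ∈ Ps.filter fun P => m ≤ P.I.k,
            P.I.len ^ (-(1 : ℝ) / 2) * (innerF f1 (P.wp 0) * innerF f2 (P.wp 1) * P.wp 2 x))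
        ≤ ENNReal.ofReal (2 * ∑ P ∈ Ps,
            P.I.len ^ (-(1 : ℝ) / 2) * (innerF f1 (P.wp 0) * innerF f2 (P.wp 1) * P.wp 2 x *
              linCoeff k a P.I.k)) := by
  set c : Quartile → ℝ := fun P =>
    P.I.len ^ (-(1 : ℝ) / 2) * (innerF f1 (P.wp 0) * innerF f2 (P.wp 1) * P.wp 2 x) with hc
  set g : ℤ → ℝ := fun m => ∑ P ∈ Ps.filter fun P => m ≤ P.I.k, c P with hgdef
  have key := fun (N : ℕ) (k : ℕ → ℤ) (hk : StrictMono k) =>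
    exists_linearization r (by linarith) Ps c (fun P => P.I.k) N k hk g fun _ => rfl
  have hfin : varNorm r Set.univ g ≠ ∞ := by
    refine ne_top_of_le_ne_top (ENNReal.ofReal_ne_top (r := ∑ P ∈ Ps, |c P|)) ?_
    refine iSup_le fun N => iSup_le fun k => iSup_le fun hk => iSup_le fun _ => ?_
    obtain ⟨kk, a, -, -, he, hb⟩ := key N k hk
    rw [he]
    exact ENNReal.ofReal_le_ofReal hb
  by_cases h0 : varNorm r Set.univ g = 0
  · refine ⟨id, 0, strictMono_id, fun s => ?_, ?_⟩
    · have : r / (r - 1) ≠ 0 := (div_pos (by linarith) (by linarith)).ne'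
      simp [Real.zero_rpow this]
    · rw [h0]
      exact zero_le
  · have hhalf := ENNReal.half_lt_self h0 hfin
    conv_rhs at hhalf => rw [varNorm]
    simp only [lt_iSup_iff] at hhalf
    obtain ⟨N, k, hk, -, hlt⟩ := hhalf
    obtain ⟨kk, a, hkk, ha, he, -⟩ := key N k hk
    refine ⟨kk, a, hkk, ha, ?_⟩
    rw [he] at hlt
    have hsum : ∑ P ∈ Ps, P.I.len ^ (-(1 : ℝ) / 2) *
        (innerF f1 (P.wp 0) * innerF f2 (P.wp 1) * P.wp 2 x * linCoeff kk a P.I.k) =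
        ∑ P ∈ Ps, c P * linCoeff kk a P.I.k :=
      Finset.sum_congr rfl fun P _ => by simp only [hc]; ring
    rw [hsum, ENNReal.ofReal_mul (by norm_num), ENNReal.ofReal_ofNat]
    calc varNorm r Set.univ g = 2 * (varNorm r Set.univ g / 2) :=
          (ENNReal.mul_div_cancel (by norm_num) (by norm_num)).symm
      _ ≤ _ := by gcongr
end
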